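/- For every N ≥ 1 and every n ∈ ℕ, the following are equivalent: (1) there exists an ℝ-linear map B : ℝⁿ → M(N,ℍ) with B(v)ᴴ B(v) = ‖v‖² I_N for all v ∈ ℝⁿ; (2) there exists an ℝ-linear map B : ℝⁿ → M(N,ℍ) with B(v) invertible for every nonzero v; (3) n ≤ ρ(N/2) + 4. (Entry 𝔤 = 𝔰𝔭(N,N) of the Hurwitz–Radon value theorem, via the 𝔭-part consisting of quaternionic block matrices [[0,B],[Bᴴ,0]]; it recovers the Adams–Lax–Phillips number ℍ(N).) -/

import Mathlib

namespace HRN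

/-- anticommuting family with squares `c`. -/
def IsCl {R : Type} [Ring R] (c : ℤ) {m : ℕ} (f : Fin m → R) : Prop :=
  (∀ i, f i * f i = (c : R)) ∧ ∀ i j, i ≠ j → f i * f j = -(f j * f i)

def Cl (c : ℤ) (m : ℕ) (V : Type) [AddCommGroup V] [Module ℝ V] : Prop :=
  ∃ f : Fin m → Module.End ℝ V, IsCl c f

def HCl (c : ℤ) (m : ℕ) (V : Type) [AddCommGroup V] [Module ℝ V] : Prop :=
  ∃ (I J : Module.End ℝ V) (f : Fin m → Module.End ℝ V), IsCl c f ∧ I * I = -1 ∧ J * J = -1 ∧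
    I * J = -(J * I) ∧ (∀ i, Commute I (f i)) ∧ (∀ i, Commute J (f i))

lemma word_mul {R : Type} [Ring R] (a b c d : R) (ab : a * b = -(b * a)) (ca : c * a = -(a * c))
    (cb : c * b = -(b * c)) : a * b * c * (a * b * d) = -((a * a) * (b * b) * (c * d)) := by
  have h1 : a * b * c * (a * b * d) = a * b * (c * a) * (b * d) := by noncomm_ring
  have h2 : a * b * (-(a * c)) * (b * d) = -(a * (b * a) * (c * b) * d) := by noncomm_ring
  have h3 : b * a = -(a * b) := by rw [ab, neg_neg]
  rw [h1, ca, h2, cb, h3]; noncomm_ring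

lemma word_comm_left {R : Type} [Ring R] (a b c : R) (ab : a * b = -(b * a))
    (ca : c * a = -(a * c)) : Commute a (a * b * c) := by
  unfold Commute SemiconjBy
  have h1 : a * b * c * a = a * b * (c * a) := by noncomm_ring
  have h2 : a * b * (-(a * c)) = - (a * (b * a) * c) := by noncomm_ring
  have h3 : b * a = -(a * b) := by rw [ab, neg_neg]
  rw [h1, ca, h2, h3]; noncomm_ring

lemma word_comm_mid {R : Type} [Ring R] (a b c : R) (ab : a * b = -(b * a))
    (cb : c * b = -(b * c)) : Commute b (a * b * c) := by
  unfold Commute SemiconjBy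
  have h1 : a * b * c * b = a * b * (c * b) := by noncomm_ring
  have h2 : b * (a * b * c) = b * a * b * c := by noncomm_ring
  have h3 : b * a = -(a * b) := by rw [ab, neg_neg]
  rw [h1, cb, h2, h3]; noncomm_ring

/-- the triple words `f 0 * f 1 * f (i+2)` -/
lemma isCl_word {R : Type} [Ring R] (c : ℤ) (hc : c * c = 1) {m : ℕ} (f : Fin (m + 2) → R)
    (hf : IsCl c f) : IsCl (-c) (fun i : Fin m => f 0 * f 1 * f i.succ.succ) := by
  have h01 : (0 : Fin (m+2)) ≠ 1 := by simp
  have h0 : ∀ i : Fin m, i.succ.succ ≠ 0 := fun i => Fin.succ_ne_zero _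
  have h1 : ∀ i : Fin m, i.succ.succ ≠ 1 := fun i => by
    rw [← Fin.succ_zero_eq_one, Ne, Fin.succ_inj]; exact Fin.succ_ne_zero _
  have hcc : (c : R) * (c : R) = 1 := by exact_mod_cast congrArg (Int.cast : ℤ → R) hc
  refine ⟨fun i => ?_, fun i j hij => ?_⟩
  · simp only
    rw [word_mul _ _ _ _ (hf.2 _ _ h01) (hf.2 _ _ (h0 i)) (hf.2 _ _ (h1 i)), hf.1, hf.1, hf.1, hcc]
    simp
  · simp only
    rw [word_mul _ _ _ _ (hf.2 _ _ h01) (hf.2 _ _ (h0 i)) (hf.2 _ _ (h1 i)),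
      word_mul _ _ _ _ (hf.2 _ _ h01) (hf.2 _ _ (h0 j)) (hf.2 _ _ (h1 j)), hf.1, hf.1, hcc,
      hf.2 i.succ.succ j.succ.succ (by simpa using hij)]
    simp

lemma word_comm {R : Type} [Ring R] (c : ℤ) {m : ℕ} (f : Fin (m + 2) → R)
    (hf : IsCl c f) (i : Fin m) : Commute (f 0) (f 0 * f 1 * f i.succ.succ) ∧
      Commute (f 1) (f 0 * f 1 * f i.succ.succ) := by
  have h01 : (0 : Fin (m+2)) ≠ 1 := by simp
  have h0 : ∀ i : Fin m, i.succ.succ ≠ 0 := fun i => Fin.succ_ne_zero _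
  have h1 : ∀ i : Fin m, i.succ.succ ≠ 1 := fun i => by
    rw [← Fin.succ_zero_eq_one, Ne, Fin.succ_inj]; exact Fin.succ_ne_zero _
  exact ⟨word_comm_left _ _ _ (hf.2 _ _ h01) (hf.2 _ _ (h0 i)),
    word_comm_mid _ _ _ (hf.2 _ _ h01) (hf.2 _ _ (h1 i))⟩

lemma isCl_map {R S : Type} [Ring R] [Ring S] (φ : R →+* S) (c : ℤ) {m : ℕ} (f : Fin m → R)
    (hf : IsCl c f) : IsCl c (fun i => φ (f i)) := by
  refine ⟨fun i => ?_, fun i j hij => ?_⟩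
  · simp only [← map_mul, hf.1, map_intCast]
  · simp only [← map_mul, hf.2 i j hij, map_neg]

/-- restriction to the fixed space of `σ` -/
noncomputable def restr {V : Type} [AddCommGroup V] [Module ℝ V] (σ : Module.End ℝ V) :
    Subring.centralizer {σ} →+* Module.End ℝ (LinearMap.ker (σ - 1)) where
  toFun x := x.1.restrict (p := LinearMap.ker (σ - 1)) (q := LinearMap.ker (σ - 1)) (by
    intro v hv
    have h := (Subring.mem_centralizer_iff.1 x.2) σ rfl
    have h2 := congrArg (fun t : Module.End ℝ V => t v) h
    simp only [Module.End.mul_apply] at h2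
    simp only [LinearMap.mem_ker, LinearMap.sub_apply, Module.End.one_apply, sub_eq_zero] at hv ⊢
    rw [h2, hv])
  map_one' := by ext; rfl
  map_mul' := by intros; ext; rfl
  map_zero' := by ext; rfl
  map_add' := by intros; ext; rfl

/-- halving -/
lemma half_finrank {V : Type} [AddCommGroup V] [Module ℝ V] [Module.Finite ℝ V]
    (σ τ : Module.End ℝ V) (hσ : σ * σ = 1) (hτ : IsUnit τ) (h : σ * τ = -(τ * σ)) :
    Module.finrank ℝ V = 2 * Module.finrank ℝ (LinearMap.ker (σ - 1)) := by
  obtain ⟨t, rfl⟩ := hτ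
  have hσ' : ∀ v, σ (σ v) = v := fun v => congrArg (fun t : Module.End ℝ V => t v) hσ
  have hh : ∀ v, σ (t.1 v) = - t.1 (σ v) := fun v => congrArg (fun t : Module.End ℝ V => t v) h
  have hrk := LinearMap.finrank_range_add_finrank_ker (σ - 1)
  have e1 : LinearMap.range (σ - 1) = (LinearMap.ker (σ - 1)).map (t.1 : V →ₗ[ℝ] V) := by
    have tinv : ∀ v, t.1 ((t⁻¹).1 v) = v := fun v =>
      congrArg (fun t : Module.End ℝ V => t v) t.mul_inv
    have tinj : Function.Injective t.1 := fun a b hab => by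
      have := congrArg (t⁻¹).1 hab
      have tinv' : ∀ v, (t⁻¹).1 (t.1 v) = v := fun v =>
        congrArg (fun t : Module.End ℝ V => t v) t.inv_mul
      rwa [tinv', tinv'] at this
    ext v
    constructor
    · rintro ⟨w, rfl⟩
      refine ⟨(t⁻¹).1 ((σ - 1) w), ?_, tinv _⟩
      simp only [SetLike.mem_coe, LinearMap.mem_ker, LinearMap.sub_apply, Module.End.one_apply,
        sub_eq_zero]
      apply tinj
      have := hh ((t⁻¹).1 (σ w - w))
      rw [tinv] at this
      rw [tinv, ← neg_eq_iff_eq_neg.2 this, map_sub, hσ']; abel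
    · rintro ⟨w, hw, rfl⟩
      simp only [SetLike.mem_coe, LinearMap.mem_ker, LinearMap.sub_apply, Module.End.one_apply,
        sub_eq_zero] at hw
      refine ⟨(-(1/2 : ℝ)) • t.1 w, ?_⟩
      simp only [LinearMap.sub_apply, Module.End.one_apply, map_smul, hh, hw]
      module
  have e2 : Module.finrank ℝ (LinearMap.range (σ - 1)) =
      Module.finrank ℝ (LinearMap.ker (σ - 1)) := by
    rw [e1]
    have tinj : Function.Injective t.1 := fun a b hab => by
      have := congrArg (t⁻¹).1 hab
      have tinv' : ∀ v, (t⁻¹).1 (t.1 v) = v := fun v =>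
        congrArg (fun t : Module.End ℝ V => t v) t.inv_mul
      rwa [tinv', tinv'] at this
    exact (Submodule.equivMapOfInjective _ tinj _).finrank_eq.symm
  omega
end HRN


namespace HRN

lemma unit_of_sq {R : Type} [Ring R] (t : R) (h : t * t = 1 ∨ t * t = -1) : IsUnit t := by
  rcases h with h | h
  · exact ⟨⟨t, t, h, h⟩, rfl⟩
  · exact ⟨⟨t, -t, by simp [h], by simp [h]⟩, rfl⟩

lemma mem_cent {R : Type} [Ring R] {σ x : R} (h : Commute σ x) : x ∈ Subring.centralizer {σ} := by
  rw [Subring.mem_centralizer_iff]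
  rintro g rfl
  exact h

lemma isCl_cent {R : Type} [Ring R] {σ : R} (c : ℤ) {m : ℕ} (f : Fin m → R) (hf : IsCl c f)
    (h : ∀ i, Commute σ (f i)) :
    IsCl c (fun i => (⟨f i, mem_cent (h i)⟩ : Subring.centralizer {σ})) := by
  refine ⟨fun i => Subtype.ext ?_, fun i j hij => Subtype.ext ?_⟩
  · simpa using hf.1 i
  · simpa using hf.2 i j hij

section steps
set_option linter.unusedSectionVars false
variable {V : Type} [AddCommGroup V] [Module ℝ V] [Module.Finite ℝ V]

lemma step1 {m : ℕ} (h : Cl 1 (m + 2) V) :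
    ∃ S : Submodule ℝ V, Module.finrank ℝ V = 2 * Module.finrank ℝ S ∧ Cl (-1) m S := by
  obtain ⟨f, hf⟩ := h
  have h01 : (0 : Fin (m+2)) ≠ 1 := by simp
  have hw := isCl_word 1 rfl f hf
  refine ⟨_, half_finrank (f 0) (f 1) (by simpa using hf.1 0)
    (unit_of_sq _ (by left; simpa using hf.1 1)) (hf.2 _ _ h01), ?_⟩
  exact ⟨_, isCl_map (restr (f 0)) (-1) _ (isCl_cent (-1) _ hw fun i => (word_comm 1 f hf i).1)⟩

lemma hcl_restr (σ I J : Module.End ℝ V) {m : ℕ} {c : ℤ} (f : Fin m → Module.End ℝ V)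
    (hf : IsCl c f) (hI : I * I = -1) (hJ : J * J = -1) (hIJ : I * J = -(J * I))
    (hIf : ∀ i, Commute I (f i)) (hJf : ∀ i, Commute J (f i)) (sI : Commute σ I)
    (sJ : Commute σ J) (sf : ∀ i, Commute σ (f i)) : HCl c m (LinearMap.ker (σ - 1)) := by
  refine ⟨restr σ ⟨I, mem_cent sI⟩, restr σ ⟨J, mem_cent sJ⟩, _,
    isCl_map (restr σ) c _ (isCl_cent c f hf sf), ?_, ?_, ?_, ?_, ?_⟩
  · rw [← map_mul, ← map_one (restr σ), ← map_neg]; congr 1; exact Subtype.ext hI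
  · rw [← map_mul, ← map_one (restr σ), ← map_neg]; congr 1; exact Subtype.ext hJ
  · rw [← map_mul, ← map_mul, ← map_neg]; congr 1; exact Subtype.ext hIJ
  · intro i
    unfold Commute SemiconjBy
    rw [← map_mul, ← map_mul]; congr 1; exact Subtype.ext (hIf i)
  · intro i
    unfold Commute SemiconjBy
    rw [← map_mul, ← map_mul]; congr 1; exact Subtype.ext (hJf i)

lemma step1H {m : ℕ} (h : HCl 1 (m + 2) V) :
    ∃ S : Submodule ℝ V, Module.finrank ℝ V = 2 * Module.finrank ℝ S ∧ HCl (-1) m S := by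
  obtain ⟨I, J, f, hf, hI, hJ, hIJ, hIf, hJf⟩ := h
  have h01 : (0 : Fin (m+2)) ≠ 1 := by simp
  have hw := isCl_word 1 rfl f hf
  refine ⟨_, half_finrank (f 0) (f 1) (by simpa using hf.1 0)
    (unit_of_sq _ (by left; simpa using hf.1 1)) (hf.2 _ _ h01), ?_⟩
  exact hcl_restr (f 0) I J _ hw hI hJ hIJ
    (fun i => ((hIf 0).mul_right (hIf 1)).mul_right (hIf _))
    (fun i => ((hJf 0).mul_right (hJf 1)).mul_right (hJf _)) (hIf 0).symm (hJf 0).symm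
    (fun i => (word_comm 1 f hf i).1)

lemma step2 {m : ℕ} (h : Cl (-1) (m + 2) V) : HCl 1 m V := by
  obtain ⟨f, hf⟩ := h
  have h01 : (0 : Fin (m+2)) ≠ 1 := by simp
  have hw := isCl_word (-1) rfl f hf
  exact ⟨f 0, f 1, _, hw, by simpa using hf.1 0, by simpa using hf.1 1, hf.2 _ _ h01,
    fun i => (word_comm _ f hf i).1, fun i => (word_comm _ f hf i).2⟩

lemma step3 {m : ℕ} (h : HCl (-1) (m + 2) V) :
    ∃ S : Submodule ℝ V, ∃ T : Submodule ℝ S,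
      Module.finrank ℝ V = 4 * Module.finrank ℝ T ∧ Cl 1 m T := by
  obtain ⟨I, J, f, hf, hI, hJ, hIJ, hIf, hJf⟩ := h
  have h01 : (0 : Fin (m+2)) ≠ 1 := by simp
  have hw := isCl_word (-1) rfl f hf
  have h0 : f 0 * f 0 = -1 := by simpa using hf.1 0
  have h1 : f 1 * f 1 = -1 := by simpa using hf.1 1
  have a01 := hf.2 _ _ h01
  have hs1 : (I * f 0) * (I * f 0) = 1 := by
    rw [(hIf 0).symm.mul_mul_mul_comm, hI, h0]; simp
  have hs2 : (J * f 1) * (J * f 1) = 1 := by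
    rw [(hJf 1).symm.mul_mul_mul_comm, hJ, h1]; simp
  have ha1 : (I * f 0) * J = -(J * (I * f 0)) := by
    rw [mul_assoc, ← (hJf 0).eq, ← mul_assoc, hIJ]; noncomm_ring
  have ha2 : (J * f 1) * I = -(I * (J * f 1)) := by
    rw [mul_assoc, ← (hIf 1).eq, ← mul_assoc, ← mul_assoc, hIJ]; noncomm_ring
  have c12 : Commute (I * f 0) (J * f 1) := by
    unfold Commute SemiconjBy
    rw [(hJf 0).symm.mul_mul_mul_comm, (hIf 1).symm.mul_mul_mul_comm, hIJ, a01]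
    noncomm_ring
  have cI : Commute (I * f 0) I := (Commute.refl I).mul_left (hIf 0).symm
  set g : Fin m → Module.End ℝ V := fun i => f 0 * f 1 * f i.succ.succ with hg
  have gI : ∀ i, Commute I (g i) := fun i => ((hIf 0).mul_right (hIf 1)).mul_right (hIf _)
  have gJ : ∀ i, Commute J (g i) := fun i => ((hJf 0).mul_right (hJf 1)).mul_right (hJf _)
  have g1 : ∀ i, Commute (I * f 0) (g i) := fun i => (gI i).mul_left (word_comm _ f hf i).1
  have g2 : ∀ i, Commute (J * f 1) (g i) := fun i => (gJ i).mul_left (word_comm _ f hf i).2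
  set σ := I * f 0 with hσ
  set s2 := restr σ ⟨_, mem_cent c12⟩ with hs2'
  set t2 := restr σ ⟨_, mem_cent cI⟩ with ht2'
  have H1 := half_finrank σ J hs1 (unit_of_sq _ (Or.inr hJ)) ha1
  have H2 := half_finrank s2 t2 (by
      rw [hs2', ← map_mul, ← map_one (restr σ)]; congr 1; exact Subtype.ext hs2)
    (unit_of_sq _ (Or.inr (by
      rw [ht2', ← map_mul, ← map_one (restr σ), ← map_neg]; congr 1; exact Subtype.ext hI)))
    (by rw [hs2', ht2', ← map_mul, ← map_mul, ← map_neg]; congr 1; exact Subtype.ext ha2)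
  refine ⟨LinearMap.ker (σ - 1), LinearMap.ker (s2 - 1), by omega, ?_⟩
  refine ⟨_, isCl_map (restr s2) 1 _ (isCl_cent 1 _ (isCl_map (restr σ) 1 _
    (isCl_cent (-(-1)) _ hw g1)) ?_)⟩
  intro i
  unfold Commute SemiconjBy
  rw [hs2', ← map_mul, ← map_mul]; congr 1; exact Subtype.ext (g2 i)

lemma even_dim (h : Cl (-1) 1 V) : 2 ∣ Module.finrank ℝ V := by
  obtain ⟨f, hf⟩ := h
  have h0 : f 0 * f 0 = -1 := by simpa using hf.1 0
  have := congrArg LinearMap.det h0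
  rw [map_mul, show (-1 : Module.End ℝ V) = (-1 : ℝ) • (1 : Module.End ℝ V) by simp,
    LinearMap.det_smul, map_one, mul_one] at this
  by_contra hc
  have ho : Odd (Module.finrank ℝ V) := by
    rw [← Nat.not_even_iff_odd, even_iff_two_dvd]; exact hc
  rw [ho.neg_one_pow] at this
  nlinarith [mul_self_nonneg (LinearMap.det (f 0))]

lemma four_dim {c : ℤ} {m : ℕ} (h : HCl c m V) : 4 ∣ Module.finrank ℝ V := by
  obtain ⟨I, J, f, -, hI, hJ, hIJ, -, -⟩ := h
  let b : QuaternionAlgebra.Basis (Module.End ℝ V) (-1 : ℝ) 0 (-1) :=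
    { i := I, j := J, k := I * J, i_mul_i := by simp [hI], j_mul_j := by simp [hJ],
      i_mul_j := rfl, j_mul_i := by simp [hIJ] }
  let φ : Quaternion ℝ →ₐ[ℝ] Module.End ℝ V := QuaternionAlgebra.lift b
  let _ : Module (Quaternion ℝ) V := Module.compHom V φ.toRingHom
  have hsm : ∀ (q : Quaternion ℝ) (v : V), q • v = φ q v := fun _ _ => rfl
  have _ : IsScalarTower ℝ (Quaternion ℝ) V := ⟨fun r q v => by
    rw [hsm, hsm, map_smul]; rfl⟩
  have := Module.finrank_mul_finrank ℝ (Quaternion ℝ) V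
  rw [Quaternion.finrank_eq_four] at this
  exact ⟨_, this.symm⟩

end steps

lemma pos3 {m q : ℕ}
    (H : ∀ (V : Type) [AddCommGroup V] [Module ℝ V] [Module.Finite ℝ V], Cl 1 m V →
      q ∣ Module.finrank ℝ V)
    (V : Type) [AddCommGroup V] [Module ℝ V] [Module.Finite ℝ V] (h : HCl (-1) (m + 2) V) :
    4 * q ∣ Module.finrank ℝ V := by
  obtain ⟨T', T'', h3, h⟩ := step3 h
  obtain ⟨k, hk⟩ := H T'' h
  rw [h3, hk]
  exact ⟨k, by ring⟩

lemma pos4 {m q : ℕ}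
    (H : ∀ (V : Type) [AddCommGroup V] [Module ℝ V] [Module.Finite ℝ V], Cl 1 m V →
      q ∣ Module.finrank ℝ V)
    (V : Type) [AddCommGroup V] [Module ℝ V] [Module.Finite ℝ V] (h : HCl 1 (m + 4) V) :
    8 * q ∣ Module.finrank ℝ V := by
  obtain ⟨T, h2, h⟩ := step1H (m := m + 2) h
  obtain ⟨k, hk⟩ := pos3 H T h
  rw [h2, hk]
  exact ⟨k, by ring⟩

lemma pos8 {m q : ℕ}
    (H : ∀ (V : Type) [AddCommGroup V] [Module ℝ V] [Module.Finite ℝ V], Cl 1 m V →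
      q ∣ Module.finrank ℝ V)
    (V : Type) [AddCommGroup V] [Module ℝ V] [Module.Finite ℝ V] (h : Cl 1 (m + 8) V) :
    16 * q ∣ Module.finrank ℝ V := by
  obtain ⟨S, h1, h⟩ := step1 (m := m + 6) h
  obtain ⟨k, hk⟩ := pos4 H S (step2 (m := m + 4) h)
  rw [h1, hk]
  exact ⟨k, by ring⟩

/-- the divisibility table -/
def tab (b : ℕ) : ℕ := if b = 0 then 2 else if b = 1 then 3 else if b = 2 then 4 else 6

lemma pos_div (a b : ℕ) (hb : b < 4) : ∀ (V : Type) [AddCommGroup V] [Module ℝ V]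
    [Module.Finite ℝ V], Cl 1 (tab b + 8 * a) V → 2 ^ (4 * a + b + 1) ∣ Module.finrank ℝ V := by
  induction a with
  | zero =>
    intro V _ _ _ h
    interval_cases b
    · obtain ⟨S, h1, h⟩ := step1 (m := 0) h
      rw [h1]; exact ⟨_, by ring⟩
    · obtain ⟨S, h1, h⟩ := step1 (m := 1) h
      obtain ⟨k, hk⟩ := even_dim h
      rw [h1, hk]; exact ⟨k, by ring⟩
    · obtain ⟨S, h1, h⟩ := step1 (m := 2) h
      obtain ⟨k, hk⟩ := four_dim (step2 (m := 0) h)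
      rw [h1, hk]; exact ⟨k, by ring⟩
    · obtain ⟨S, h1, h⟩ := step1 (m := 4) h
      obtain ⟨T, h2, h⟩ := step1H (m := 0) (step2 (m := 2) h)
      obtain ⟨k, hk⟩ := four_dim h
      rw [h1, h2, hk]; exact ⟨k, by ring⟩
  | succ a ih =>
    intro V _ _ _ h
    have := pos8 ih V (by rwa [show tab b + 8 * (a + 1) = tab b + 8 * a + 8 by ring] at h)
    rwa [show 2 ^ (4 * (a + 1) + b + 1) = 16 * 2 ^ (4 * a + b + 1) by ring]

end HRN


namespace HRN

def IsRep {R : Type} [Ring R] {n : ℕ} (g I J : R) (r : Fin n → R) : Prop :=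
  g * g = 1 ∧ (∀ i, g * r i = -(r i * g)) ∧ IsCl (-1) r ∧ I * I = -1 ∧ J * J = -1 ∧
    I * J = -(J * I) ∧ (∀ i, Commute I (r i)) ∧ (∀ i, Commute J (r i)) ∧ Commute I g ∧ Commute J g

lemma IsRep.map {R S : Type} [Ring R] [Ring S] (φ : R →+* S) {n : ℕ} {g I J : R} {r : Fin n → R}
    (h : IsRep g I J r) : IsRep (φ g) (φ I) (φ J) (fun i => φ (r i)) := by
  obtain ⟨h1, h2, h3, h4, h5, h6, h7, h8, h9, h10⟩ := h
  refine ⟨?_, fun i => ?_, isCl_map φ _ _ h3, ?_, ?_, ?_, fun i => (h7 i).map φ,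
    fun i => (h8 i).map φ, h9.map φ, h10.map φ⟩
  · rw [← map_mul, h1, map_one]
  · rw [← map_mul, h2, map_neg, map_mul]
  · rw [← map_mul, h4, map_neg, map_one]
  · rw [← map_mul, h5, map_neg, map_one]
  · rw [← map_mul, h6, map_neg, map_mul]

lemma rep_div1 {m q : ℕ}
    (H : ∀ (V : Type) [AddCommGroup V] [Module ℝ V] [Module.Finite ℝ V], Cl 1 m V →
      q ∣ Module.finrank ℝ V)
    (V : Type) [AddCommGroup V] [Module ℝ V] [Module.Finite ℝ V] (g I J : Module.End ℝ V)
    (r : Fin (m + 3) → Module.End ℝ V) (h : IsRep g I J r) : 8 * q ∣ Module.finrank ℝ V := by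
  obtain ⟨h1, h2, h3, h4, h5, h6, h7, h8, h9, h10⟩ := h
  have r0 : r 0 * r 0 = -1 := by simpa using h3.1 0
  have H1 := half_finrank g (r 0) h1 (unit_of_sq _ (Or.inr r0)) (h2 0)
  have key : ∀ i j : Fin (m+2), r 0 * r i.succ * (r 0 * r j.succ) = r i.succ * r j.succ := by
    intro i j
    have e1 : r 0 * r i.succ * (r 0 * r j.succ) = (r 0 * r i.succ) * r 0 * r j.succ := by
      noncomm_ring
    have e2 : -(r i.succ * r 0) * r 0 * r j.succ = -(r i.succ * (r 0 * r 0) * r j.succ) := by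
      noncomm_ring
    rw [e1, h3.2 0 i.succ (Fin.succ_ne_zero i).symm, e2, r0]; noncomm_ring
  have hf : IsCl (-1) (fun i : Fin (m+2) => r 0 * r i.succ) := by
    refine ⟨fun i => ?_, fun i j hij => ?_⟩
    · simp only [key]; exact h3.1 _
    · simp only [key]; exact h3.2 _ _ (by simpa using hij)
  have hgr : ∀ i : Fin (m+2), Commute g (r 0 * r i.succ) := by
    intro i
    unfold Commute SemiconjBy
    rw [← mul_assoc, h2, neg_mul, mul_assoc, h2]; noncomm_ring
  obtain ⟨k, hk⟩ := pos3 H (LinearMap.ker (g - 1)) (hcl_restr g I J _ hf h4 h5 h6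
    (fun i => (h7 0).mul_right (h7 _)) (fun i => (h8 0).mul_right (h8 _)) h9.symm h10.symm hgr)
  rw [H1, hk]
  exact ⟨k, by ring⟩

lemma IsRep.cent {R : Type} [Ring R] {n : ℕ} {p g I J : R} {r : Fin n → R}
    (h : IsRep g I J r) (hg : Commute p g) (hI : Commute p I) (hJ : Commute p J)
    (hr : ∀ i, Commute p (r i)) : IsRep (⟨g, mem_cent hg⟩ : Subring.centralizer {p})
      ⟨I, mem_cent hI⟩ ⟨J, mem_cent hJ⟩ (fun i => ⟨r i, mem_cent (hr i)⟩) := by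
  obtain ⟨h1, h2, h3, h4, h5, h6, h7, h8, h9, h10⟩ := h
  exact ⟨Subtype.ext h1, fun i => Subtype.ext (h2 i), isCl_cent _ _ h3 hr, Subtype.ext h4,
    Subtype.ext h5, Subtype.ext h6, fun i => Subtype.ext (h7 i), fun i => Subtype.ext (h8 i),
    Subtype.ext h9, Subtype.ext h10⟩

lemma trace_half (V : Type) [AddCommGroup V] [Module ℝ V] [Module.Finite ℝ V]
    (p : Module.End ℝ V) (hp : p * p = 1) :
    LinearMap.trace ℝ V ((1/2 : ℝ) • (1 + p)) = Module.finrank ℝ (LinearMap.ker (p - 1)) := by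
  have hp' : ∀ v, p (p v) = v := fun v => congrArg (fun t : Module.End ℝ V => t v) hp
  apply LinearMap.IsProj.trace
  constructor
  · intro v
    simp only [LinearMap.mem_ker, LinearMap.sub_apply, LinearMap.smul_apply, LinearMap.add_apply,
      Module.End.one_apply, map_smul, map_add, hp']
    module
  · intro v hv
    simp only [LinearMap.mem_ker, LinearMap.sub_apply, Module.End.one_apply, sub_eq_zero] at hv
    simp only [LinearMap.smul_apply, LinearMap.add_apply, Module.End.one_apply, hv]
    module

lemma rep_div2 {m q N : ℕ}
    (H : ∀ (V : Type) [AddCommGroup V] [Module ℝ V] [Module.Finite ℝ V], Cl 1 m V →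
      q ∣ Module.finrank ℝ V)
    (V : Type) [AddCommGroup V] [Module ℝ V] [Module.Finite ℝ V] (p g I J : Module.End ℝ V)
    (r : Fin (m + 3) → Module.End ℝ V) (h : IsRep g I J r) (hp : p * p = 1)
    (hg : Commute p g) (hI : Commute p I) (hJ : Commute p J)
    (hr : ∀ i, Commute p (r i)) (ht : LinearMap.trace ℝ V p = 8 * N) : q ∣ N := by
  have k1 := rep_div1 H _ _ _ _ _ ((h.cent hg hI hJ hr).map (restr p))
  have k2 := rep_div1 H _ _ _ _ _ ((h.cent hg.neg_left hI.neg_left hJ.neg_left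
    (fun i => (hr i).neg_left)).map (restr (-p)))
  have t1 := trace_half V p hp
  have t2 := trace_half V (-p) (by simpa using hp)
  have t3 : LinearMap.trace ℝ V p = LinearMap.trace ℝ V ((1/2 : ℝ) • (1 + p)) -
      LinearMap.trace ℝ V ((1/2 : ℝ) • (1 + -p)) := by
    rw [← map_sub]; congr 1; module
  rw [t1, t2, ht] at t3
  obtain ⟨x, hx⟩ := k1
  obtain ⟨y, hy⟩ := k2
  rw [hx, hy] at t3
  have : (N : ℤ) = q * (x - y) := by
    have : (N : ℝ) = q * (x - y) := by push_cast at t3; linarith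
    exact_mod_cast this
  exact Int.natCast_dvd_natCast.1 ⟨_, this⟩

lemma rep_div (a b N d n : ℕ) (hb : b < 4) (hn : n = tab b + 8 * a + 3)
    (p g I J : Matrix (Fin d) (Fin d) ℝ)
    (r : Fin n → Matrix (Fin d) (Fin d) ℝ) (h : IsRep g I J r) (hp : p * p = 1)
    (hg : Commute p g) (hI : Commute p I) (hJ : Commute p J)
    (hr : ∀ i, Commute p (r i)) (ht : Matrix.trace p = 8 * N) : 2 ^ (4 * a + b + 1) ∣ N := by
  subst hn
  let φ : Matrix (Fin d) (Fin d) ℝ →+* Module.End ℝ (Fin d → ℝ) :=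
    (Matrix.toLinAlgEquiv' (R := ℝ) (n := Fin d)).toRingEquiv.toRingHom
  refine rep_div2 (pos_div a b hb) (Fin d → ℝ) (φ p) _ _ _ _ (h.map φ) ?_ (hg.map φ) (hI.map φ)
    (hJ.map φ) (fun i => (hr i).map φ) ?_
  · rw [← map_mul, hp, map_one]
  · rw [← ht]
    exact Matrix.trace_toLin'_eq p

end HRN


namespace HRN
open Matrix

structure One (s : ℕ) (ι : Type) [Fintype ι] [DecidableEq ι] where
  A : Matrix ι ι ℝ
  X : Matrix ι ι ℝ
  δ : Matrix ι ι ℝ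
  χ : Matrix ι ι ℝ
  p : Matrix ι ι ℝ
  U : Matrix ι ι ℝ
  ξ : ι → ℝ
  η : ι → ℝ
  χχ : χ * χ = 1
  χt : χᵀ = χ
  pp : p * p = 1
  pt : pᵀ = p
  pχ : p * χ = χ * p
  trp : p.trace = 1
  Xt : Xᵀ = X
  δt : δᵀ = -δ
  At : Aᵀ = A
  δX : δ * X - X * δ = A
  AX : (s : ℝ) • (A * X - X * A) = δ
  Aδ : (s : ℝ) • (A * δ - δ * A) = X
  χX : χ * X = X * χ
  χδ : χ * δ = -(δ * χ)
  χA : χ * A = -(A * χ)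
  pX : p * X = -(X * p)
  pδ : p * δ = -(δ * p)
  pA : p * A = A * p
  hη : X * X - δ * δ = diagonal η
  AA : (s : ℝ) • (1 - A * A) = diagonal η - 1
  η0 : ∀ i, 0 ≤ η i
  ηc : ∀ K : ℕ, (Finset.univ.filter (fun i => η i < K)).card ≤ 2 * K
  UU : Uᵀ * U = 1
  XU : X = Uᵀ * diagonal ξ * U

lemma exists_diag {ι : Type} [Fintype ι] [DecidableEq ι] (X : Matrix ι ι ℝ) (hX : Xᵀ = X) :
    ∃ (U : Matrix ι ι ℝ) (ξ : ι → ℝ), Uᵀ * U = 1 ∧ X = Uᵀ * diagonal ξ * U := by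
  have h : X.IsHermitian := by
    unfold Matrix.IsHermitian; rw [conjTranspose_eq_transpose_of_trivial]; exact hX
  refine ⟨(h.eigenvectorUnitary : Matrix ι ι ℝ)ᵀ, h.eigenvalues, ?_, ?_⟩
  · have := (h.eigenvectorUnitary).2
    rw [Matrix.mem_unitaryGroup_iff] at this
    rw [transpose_transpose]
    exact this
  · conv_lhs => rw [h.spectral_theorem]
    rw [transpose_transpose]
    rfl

section su
variable (s : ℕ)

noncomputable def sE : Matrix (Fin (2*s+1)) (Fin (2*s+1)) ℝ :=
  fun i j => if (i : ℕ) + 1 = j then √(((i : ℕ) + 1 : ℝ) * (2 * s - (i : ℕ))) else 0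

lemma sE_mul : sE s * (sE s)ᵀ = diagonal (fun i : Fin (2*s+1) => ((i : ℕ) + 1 : ℝ) * (2 * s - (i : ℕ))) := by
  ext i j
  rw [mul_apply]
  simp only [transpose_apply, sE, diagonal_apply]
  have hi : (i : ℕ) ≤ 2 * s := by omega
  have hi' : ((i : ℕ) : ℝ) ≤ 2 * s := by exact_mod_cast hi
  split_ifs with h
  · subst h
    rcases hi.lt_or_eq with hlt | heq
    · rw [Finset.sum_eq_single (⟨i + 1, by omega⟩ : Fin (2*s+1))]
      · simp only [if_true]
        apply Real.mul_self_sqrt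
        apply mul_nonneg (by positivity); linarith
      · intro k _ hk
        have : (i : ℕ) + 1 ≠ k := fun h => hk (Fin.ext h.symm)
        simp [this]
      · simp
    · rw [Finset.sum_eq_zero]
      · rw [heq]; push_cast; ring
      · intro k _
        have : (i : ℕ) + 1 ≠ k := by omega
        simp [this]
  · apply Finset.sum_eq_zero
    intro k _
    by_cases h1 : (i : ℕ) + 1 = k
    · have : (j : ℕ) + 1 ≠ k := fun h2 => h (Fin.ext (by omega))
      simp [this]
    · simp [h1]

lemma sE_mul' : (sE s)ᵀ * sE s = diagonal (fun i : Fin (2*s+1) => ((i : ℕ) : ℝ) * (2 * s + 1 - (i : ℕ))) := by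
  ext i j
  rw [mul_apply]
  simp only [transpose_apply, sE, diagonal_apply]
  have hi : (i : ℕ) ≤ 2 * s := by omega
  have hi' : ((i : ℕ) : ℝ) ≤ 2 * s := by exact_mod_cast hi
  split_ifs with h
  · subst h
    rcases Nat.eq_zero_or_pos (i : ℕ) with h0 | h0
    · rw [Finset.sum_eq_zero]
      · simp [h0]
      · intro k _
        have : (k : ℕ) + 1 ≠ i := by omega
        simp [this]
    · rw [Finset.sum_eq_single (⟨i - 1, by omega⟩ : Fin (2*s+1))]
      · have : (i : ℕ) - 1 + 1 = i := by omega
        simp only [this, if_true]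
        have e : (((i : ℕ) - 1 : ℕ) : ℝ) = (i : ℕ) - 1 := by push_cast [h0]; ring
        rw [e, Real.mul_self_sqrt]
        · ring
        · apply mul_nonneg (by simp); linarith
      · intro k _ hk
        have : (k : ℕ) + 1 ≠ i := fun h => hk (Fin.ext (by simp; omega))
        simp [this]
      · simp
  · apply Finset.sum_eq_zero
    intro k _
    by_cases h1 : (k : ℕ) + 1 = i
    · have : (k : ℕ) + 1 ≠ j := fun h2 => h (Fin.ext (by omega))
      simp [this]
    · simp [h1]

noncomputable def sA : Matrix (Fin (2*s+1)) (Fin (2*s+1)) ℝ :=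
  diagonal (fun i => ((s : ℝ) - (i : ℕ)) / s)

def sχ : Matrix (Fin (2*s+1)) (Fin (2*s+1)) ℝ := fun i j => if i.rev = j then 1 else 0

def sp : Matrix (Fin (2*s+1)) (Fin (2*s+1)) ℝ := diagonal (fun i => (-1) ^ (i : ℕ))

lemma sχ_mul (M : Matrix (Fin (2*s+1)) (Fin (2*s+1)) ℝ) (i j) : (sχ s * M) i j = M i.rev j := by
  simp [mul_apply, sχ]

lemma mul_sχ (M : Matrix (Fin (2*s+1)) (Fin (2*s+1)) ℝ) (i j) : (M * sχ s) i j = M i j.rev := by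
  simp only [mul_apply, sχ]
  rw [Finset.sum_eq_single j.rev]
  · simp
  · intro k _ hk
    have : k.rev ≠ j := fun h => hk (by rw [← h, Fin.rev_rev])
    simp [this]
  · simp

lemma sAE (hs : 1 ≤ s) : (s : ℝ) • (sA s * sE s - sE s * sA s) = sE s := by
  have hs' : (s : ℝ) ≠ 0 := by positivity
  ext i j
  simp only [sA, Matrix.smul_apply, Matrix.sub_apply, diagonal_mul, mul_diagonal, sE]
  split_ifs with h
  · rw [← h, smul_eq_mul]; push_cast; field_simp; ring
  · simp

lemma sχE : sχ s * sE s = (sE s)ᵀ * sχ s := by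
  ext i j
  rw [sχ_mul, mul_sχ]
  simp only [transpose_apply, sE, Fin.val_rev]
  by_cases h : (2 * s + 1 - ((i : ℕ) + 1) + 1 = j)
  · have h2 : 2 * s + 1 - ((j : ℕ) + 1) + 1 = i := by omega
    rw [if_pos h, if_pos h2]
    congr 1
    have hi : (i : ℕ) + 1 ≤ 2 * s + 1 := by omega
    have hj : (j : ℕ) + 1 ≤ 2 * s + 1 := by omega
    rw [Nat.cast_sub hi, Nat.cast_sub hj]
    push_cast
    have : ((i : ℕ) : ℝ) = 2 * s + 1 - j := by
      have : (i : ℕ) + j = 2 * s + 1 := by omega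
      have : ((i : ℕ) : ℝ) + (j : ℕ) = 2 * s + 1 := by exact_mod_cast this
      linarith
    rw [this]; ring
  · have h2 : ¬ (2 * s + 1 - ((j : ℕ) + 1) + 1 = i) := by omega
    rw [if_neg h, if_neg h2]

lemma spE : sp s * sE s = -(sE s * sp s) := by
  ext i j
  simp only [sp, Matrix.neg_apply, diagonal_mul, mul_diagonal, sE]
  split_ifs with h
  · rw [← h, pow_succ]; ring
  · simp

noncomputable def sη (i : Fin (2*s+1)) : ℝ := 1 + 2 * (i : ℕ) - (i : ℕ) ^ 2 / s

lemma sη_ge (hs : 1 ≤ s) (i : Fin (2*s+1)) (k : ℕ) (hk : k ≤ i) (hk2 : k ≤ 2 * s - i) :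
    (1 + k : ℝ) ≤ sη s i := by
  have hs' : (0 : ℝ) < s := by positivity
  have h1 : (k : ℝ) ≤ (i : ℕ) := by exact_mod_cast hk
  have h2 : (k : ℝ) + (i : ℕ) ≤ 2 * s := by
    have : k + i ≤ 2 * s := by omega
    exact_mod_cast this
  unfold sη
  have : ((i : ℕ) : ℝ) ^ 2 / s ≤ 2 * (i : ℕ) - k := by
    rw [div_le_iff₀ hs']
    have h0 : (0:ℝ) ≤ k := by positivity
    nlinarith [mul_nonneg (sub_nonneg.2 h1) (sub_nonneg.2 h2)]
  linarith

noncomputable def one (hs : 1 ≤ s) : One s (Fin (2*s+1)) :=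
  have hs0 : (0:ℝ) < s := by positivity
  have hs' : (s : ℝ) ≠ 0 := hs0.ne'
  have hsq : √(s:ℝ) ≠ 0 := (Real.sqrt_pos.2 hs0).ne'
  have hc : (1 / (2 * √(s:ℝ))) * (1 / (2 * √(s:ℝ))) = 1 / (4 * s) := by
    field_simp; rw [Real.sq_sqrt hs0.le]; ring
  have Et : (s : ℝ) • (sA s * (sE s)ᵀ - (sE s)ᵀ * sA s) = -(sE s)ᵀ := by
    have h := congrArg transpose (sAE s hs)
    have hA : (sA s)ᵀ = sA s := by simp [sA]
    rw [transpose_smul, transpose_sub, transpose_mul, transpose_mul, hA] at h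
    rw [← neg_sub, smul_neg, h]
  have χEt : sχ s * (sE s)ᵀ = sE s * sχ s := by
    ext i j
    rw [sχ_mul, mul_sχ]
    have h := congrFun (congrFun (sχE s) j.rev) i.rev
    rw [sχ_mul, mul_sχ, Fin.rev_rev, transpose_apply, Fin.rev_rev] at h
    exact h
  have pEt : sp s * (sE s)ᵀ = -((sE s)ᵀ * sp s) := by
    have h := congrArg transpose (spE s)
    have hp : (sp s)ᵀ = sp s := by simp [sp]
    rw [transpose_neg, transpose_mul, transpose_mul, hp] at h
    rw [h, neg_neg]
  have Xt' : ((1 / (2 * √(s:ℝ))) • (sE s + (sE s)ᵀ))ᵀ = (1 / (2 * √(s:ℝ))) • (sE s + (sE s)ᵀ) := by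
    rw [transpose_smul, transpose_add, transpose_transpose, add_comm (sE s)ᵀ]
  have hη' : ((1 / (2 * √(s:ℝ))) • (sE s + (sE s)ᵀ)) * ((1 / (2 * √(s:ℝ))) • (sE s + (sE s)ᵀ)) -
      ((1 / (2 * √(s:ℝ))) • (sE s - (sE s)ᵀ)) * ((1 / (2 * √(s:ℝ))) • (sE s - (sE s)ᵀ))
      = diagonal (sη s) := by
    simp only [smul_mul_smul_comm, hc]
    rw [← smul_sub, show (sE s + (sE s)ᵀ) * (sE s + (sE s)ᵀ) - (sE s - (sE s)ᵀ) * (sE s - (sE s)ᵀ)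
      = (2:ℝ) • (sE s * (sE s)ᵀ + (sE s)ᵀ * sE s) by rw [two_smul]; noncomm_ring, sE_mul, sE_mul',
      diagonal_add, ← diagonal_smul, ← diagonal_smul]
    congr 1; ext i
    simp only [Pi.smul_apply, smul_eq_mul, sη]
    field_simp; ring
  { A := sA s
    X := (1 / (2 * √(s:ℝ))) • (sE s + (sE s)ᵀ)
    δ := (1 / (2 * √(s:ℝ))) • (sE s - (sE s)ᵀ)
    χ := sχ s
    p := sp s
    U := (exists_diag _ Xt').choose
    ξ := (exists_diag _ Xt').choose_spec.choose
    η := sη s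
    χχ := by
      ext i j
      rw [sχ_mul]; simp [sχ, one_apply]
    χt := by
      ext i j
      have : (j.rev = i) ↔ (i.rev = j) := by rw [Fin.rev_eq_iff, eq_comm]
      simp [sχ, this]
    pp := by
      simp [sp, ← mul_pow]
    pt := by simp [sp]
    pχ := by
      ext i j
      rw [mul_sχ, sχ_mul]
      simp only [sp, diagonal_apply]
      by_cases h : i = j.rev
      · have h2 : i.rev = j := by rw [h, Fin.rev_rev]
        rw [if_pos h, if_pos h2]
        have : ((i.rev : Fin (2*s+1)) : ℕ) = 2 * s - i := by rw [Fin.val_rev]; omega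
        rw [this]
        have hi : (i : ℕ) ≤ 2 * s := by omega
        rw [neg_one_pow_eq_pow_mod_two, neg_one_pow_eq_pow_mod_two (n := 2 * s - i)]
        congr 1; omega
      · have h2 : ¬ i.rev = j := by rwa [Fin.rev_eq_iff]
        rw [if_neg h, if_neg h2]
    trp := by
      simp only [trace, sp, diag_diagonal]
      rw [Fin.sum_univ_eq_sum_range (fun i => (-1 : ℝ) ^ i) (2*s+1), neg_one_geom_sum]
      simp
    Xt := Xt'
    δt := by
      rw [transpose_smul, transpose_sub, transpose_transpose, ← smul_neg, neg_sub]
    At := by simp [sA]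
    δX := by
      simp only [smul_mul_smul_comm, hc]
      rw [← smul_sub, show (sE s - (sE s)ᵀ) * (sE s + (sE s)ᵀ) - (sE s + (sE s)ᵀ) * (sE s - (sE s)ᵀ)
        = (2:ℝ) • (sE s * (sE s)ᵀ - (sE s)ᵀ * sE s) by rw [two_smul]; noncomm_ring, sE_mul, sE_mul',
        diagonal_sub, ← diagonal_smul, ← diagonal_smul, sA]
      congr 1; ext i
      simp only [Pi.smul_apply, smul_eq_mul]
      field_simp; ring
    AX := by
      have h1 := sAE s hs
      have h2 := Et
      have h3 : (s : ℝ) • (sA s * ((1 / (2 * √(s:ℝ))) • (sE s + (sE s)ᵀ)) -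
        ((1 / (2 * √(s:ℝ))) • (sE s + (sE s)ᵀ)) * sA s) = (1 / (2 * √(s:ℝ))) •
        ((s : ℝ) • (sA s * sE s - sE s * sA s) +
          (s : ℝ) • (sA s * (sE s)ᵀ - (sE s)ᵀ * sA s)) := by
        rw [mul_smul_comm, smul_mul_assoc, mul_add, add_mul]; module
      rw [h3, h1, h2, sub_eq_add_neg]
    Aδ := by
      have h1 := sAE s hs
      have h2 := Et
      have h3 : (s : ℝ) • (sA s * ((1 / (2 * √(s:ℝ))) • (sE s - (sE s)ᵀ)) -
        ((1 / (2 * √(s:ℝ))) • (sE s - (sE s)ᵀ)) * sA s) = (1 / (2 * √(s:ℝ))) •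
        ((s : ℝ) • (sA s * sE s - sE s * sA s) -
          (s : ℝ) • (sA s * (sE s)ᵀ - (sE s)ᵀ * sA s)) := by
        rw [mul_smul_comm, smul_mul_assoc, mul_sub, sub_mul]; module
      rw [h3, h1, h2, sub_neg_eq_add]
    χX := by
      rw [mul_smul_comm, smul_mul_assoc, mul_add, add_mul, sχE, χEt, add_comm (sE s * sχ s)]
    χδ := by
      rw [mul_smul_comm, smul_mul_assoc, mul_sub, sub_mul, sχE, χEt, ← smul_neg, neg_sub]
    χA := by
      ext i j
      rw [sχ_mul, Matrix.neg_apply, mul_sχ]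
      simp only [sA, diagonal_apply]
      by_cases h : i = j.rev
      · have h2 : i.rev = j := by rw [h, Fin.rev_rev]
        rw [if_pos h, if_pos h2]
        have : ((i.rev : Fin (2*s+1)) : ℕ) + i = 2 * s := by rw [Fin.val_rev]; omega
        have : (((i.rev : Fin (2*s+1)) : ℕ) : ℝ) + (i : ℕ) = 2 * s := by exact_mod_cast this
        field_simp; linarith
      · have h2 : ¬ i.rev = j := by rwa [Fin.rev_eq_iff]
        rw [if_neg h, if_neg h2]; simp
    pX := by
      rw [mul_smul_comm, smul_mul_assoc, mul_add, add_mul, spE, pEt, ← smul_neg, neg_add]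
    pδ := by
      rw [mul_smul_comm, smul_mul_assoc, mul_sub, sub_mul, spE, pEt, ← smul_neg]
      congr 1; abel
    pA := by
      simp [sp, sA, mul_comm]
    hη := hη'
    AA := by
      rw [sA, diagonal_mul_diagonal, ← diagonal_one, diagonal_sub, diagonal_sub, ← diagonal_smul]
      congr 1; ext i
      simp only [Pi.smul_apply, smul_eq_mul, sη]
      field_simp; ring
    η0 := fun i => by
      have := sη_ge s hs i 0 (by omega) (by omega)
      push_cast at this; linarith
    ηc := fun K => by
      classical
      have hsub : (Finset.univ.filter (fun i => sη s i < K)) ⊆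
          (Finset.univ.filter (fun i : Fin (2*s+1) => (i : ℕ) < K)) ∪
          ((Finset.univ.filter (fun i : Fin (2*s+1) => (i : ℕ) < K))).image Fin.rev := by
        intro i hi
        simp only [Finset.mem_filter, Finset.mem_univ, true_and, Finset.mem_union,
          Finset.mem_image] at hi ⊢
        by_contra hcon
        rw [not_or] at hcon
        have h1 : K ≤ i := by omega
        have h2 : K ≤ 2 * s - i := by
          by_contra h
          apply hcon.2
          refine ⟨i.rev, ?_, Fin.rev_rev i⟩
          rw [Fin.val_rev]; omega
        have := sη_ge s hs i K h1 h2
        linarith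
      have hc1 : (Finset.univ.filter (fun i : Fin (2*s+1) => (i : ℕ) < K)).card ≤ K := by
        have := Finset.card_le_card_of_injOn
          (s := Finset.univ.filter (fun i : Fin (2*s+1) => (i : ℕ) < K)) (t := Finset.range K)
          (fun i => (i : ℕ)) (fun i hi => by simpa using hi) (fun i _ j _ h => Fin.ext h)
        rwa [Finset.card_range] at this
      calc _ ≤ _ := Finset.card_le_card hsub
        _ ≤ _ := Finset.card_union_le _ _
        _ ≤ K + K := add_le_add hc1 (Finset.card_image_le.trans hc1)
        _ = 2 * K := by ring
    UU := (exists_diag _ Xt').choose_spec.choose_spec.1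
    XU := (exists_diag _ Xt').choose_spec.choose_spec.2 }
end su
end HRN


namespace HRN
open Matrix Kronecker

structure Lat (s n : ℕ) (α : Type) [Fintype α] [DecidableEq α] where
  D : Fin n → Matrix α α ℝ
  X : Fin n → Matrix α α ℝ
  R : Fin n → Matrix α α ℝ
  Θ : Matrix α α ℝ
  P : Matrix α α ℝ
  U : Matrix α α ℝ
  ξ : Fin n → α → ℝ
  η : α → ℝ
  ΘΘ : Θ * Θ = 1
  Θt : Θᵀ = Θ
  PP : P * P = 1
  Pt : Pᵀ = P
  PΘ : P * Θ = Θ * P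
  trP : P.trace = 1
  UU : Uᵀ * U = 1
  Dt : ∀ i, (D i)ᵀ = D i
  DD : ∀ i j, i ≠ j → D i * D j = -(D j * D i)
  DΘ : ∀ i, D i * Θ = -(Θ * D i)
  PD : ∀ i, P * D i = -(D i * P)
  Xt : ∀ i, (X i)ᵀ = X i
  XU : ∀ i, X i = Uᵀ * diagonal (ξ i) * U
  XΘ : ∀ i, X i * Θ = Θ * X i
  PX : ∀ i, P * X i = -(X i * P)
  DX : ∀ i j, i ≠ j → D i * X j = X j * D i
  CC : ∀ i, (D i * X i - X i * D i) * (D i * X i - X i * D i) = R i * R i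
  Rt : ∀ i, (R i)ᵀ = -R i
  RR : ∀ i j, i ≠ j → R i * R j = -(R j * R i)
  RΘ : ∀ i, R i * Θ = -(Θ * R i)
  PR : ∀ i, P * R i = R i * P
  RD : ∀ i j, i ≠ j → R i * D j = D j * R i
  RX : ∀ i j, i ≠ j → R i * X j = X j * R i
  RRs : ∀ i, (s : ℝ) • (R i * R i + 1) = X i * X i + D i * D i - 1
  comD : ∀ i, ((s : ℝ) • (R i * D i - D i * R i)) * ((s : ℝ) • (R i * D i - D i * R i)) = X i * X i
  comX : ∀ i, ((s : ℝ) • (R i * X i - X i * R i)) * ((s : ℝ) • (R i * X i - X i * R i)) = D i * D i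
  hη : ∑ i, (X i * X i + D i * D i) = diagonal η
  η0 : ∀ a, 0 ≤ η a
  ηc : ∀ K : ℕ, (Finset.univ.filter (fun a => η a < K)).card ≤ (2 * K) ^ n

def Lat.zero (s : ℕ) : Lat s 0 Unit where
  D := Fin.elim0
  X := Fin.elim0
  R := Fin.elim0
  Θ := 1
  P := 1
  U := 1
  ξ := Fin.elim0
  η := 0
  ΘΘ := by simp
  Θt := by simp
  PP := by simp
  Pt := by simp
  PΘ := by simp
  trP := by simp
  UU := by simp
  Dt := fun i => i.elim0
  DD := fun i => i.elim0
  DΘ := fun i => i.elim0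
  PD := fun i => i.elim0
  Xt := fun i => i.elim0
  XU := fun i => i.elim0
  XΘ := fun i => i.elim0
  PX := fun i => i.elim0
  DX := fun i => i.elim0
  CC := fun i => i.elim0
  Rt := fun i => i.elim0
  RR := fun i => i.elim0
  RΘ := fun i => i.elim0
  PR := fun i => i.elim0
  RD := fun i => i.elim0
  RX := fun i => i.elim0
  RRs := fun i => i.elim0
  comD := fun i => i.elim0
  comX := fun i => i.elim0
  hη := by simp
  η0 := by simp
  ηc := fun K => by
    calc _ ≤ (Finset.univ : Finset Unit).card := Finset.card_filter_le _ _
      _ = _ := by simp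

section kron
variable {ι α : Type} [Fintype ι] [Fintype α]

lemma kmul (A C : Matrix ι ι ℝ) (B D : Matrix α α ℝ) :
    (A ⊗ₖ B) * (C ⊗ₖ D) = (A * C) ⊗ₖ (B * D) := (mul_kronecker_mul A C B D).symm

lemma neg_k (A : Matrix ι ι ℝ) (B : Matrix α α ℝ) : (-A) ⊗ₖ B = -(A ⊗ₖ B) := by
  rw [← neg_one_smul ℝ A, smul_kronecker, neg_one_smul]

lemma k_neg (A : Matrix ι ι ℝ) (B : Matrix α α ℝ) : A ⊗ₖ (-B) = -(A ⊗ₖ B) := by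
  rw [← neg_one_smul ℝ B, kronecker_smul, neg_one_smul]

lemma sub_k (A C : Matrix ι ι ℝ) (B : Matrix α α ℝ) : (A - C) ⊗ₖ B = A ⊗ₖ B - C ⊗ₖ B := by
  rw [sub_eq_add_neg, add_kronecker, neg_k, sub_eq_add_neg]

lemma k_sub (A : Matrix ι ι ℝ) (B C : Matrix α α ℝ) : A ⊗ₖ (B - C) = A ⊗ₖ B - A ⊗ₖ C := by
  rw [sub_eq_add_neg, kronecker_add, k_neg, sub_eq_add_neg]

lemma kt (A : Matrix ι ι ℝ) (B : Matrix α α ℝ) : (A ⊗ₖ B)ᵀ = Aᵀ ⊗ₖ Bᵀ :=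
  (kroneckerMap_transpose _ A B).symm

lemma k11 [DecidableEq ι] [DecidableEq α] :
    (1 : Matrix (ι × α) (ι × α) ℝ) = (1 : Matrix ι ι ℝ) ⊗ₖ (1 : Matrix α α ℝ) :=
  one_kronecker_one.symm

lemma k_sum {κ : Type} (S : Finset κ) (A : Matrix ι ι ℝ) (B : κ → Matrix α α ℝ) :
    A ⊗ₖ (∑ i ∈ S, B i) = ∑ i ∈ S, A ⊗ₖ B i := by
  classical
  induction S using Finset.induction_on with
  | empty => simp
  | insert a S ha ih => rw [Finset.sum_insert ha, Finset.sum_insert ha, kronecker_add, ih]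

lemma sum_k {κ : Type} (S : Finset κ) (A : κ → Matrix ι ι ℝ) (B : Matrix α α ℝ) :
    (∑ i ∈ S, A i) ⊗ₖ B = ∑ i ∈ S, A i ⊗ₖ B := by
  classical
  induction S using Finset.induction_on with
  | empty => simp
  | insert a S ha ih => rw [Finset.sum_insert ha, Finset.sum_insert ha, add_kronecker, ih]
end kron

section step
variable {s n : ℕ} {ι α : Type} [Fintype ι] [Fintype α] [DecidableEq ι] [DecidableEq α]

lemma One.χδχ (o : One s ι) : o.χ * o.δ * o.χ = -o.δ := by
  rw [o.χδ, neg_mul, mul_assoc, o.χχ, mul_one]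
lemma One.χAχ (o : One s ι) : o.χ * o.A * o.χ = -o.A := by
  rw [o.χA, neg_mul, mul_assoc, o.χχ, mul_one]

noncomputable def Lat.succ (o : One s ι) (l : Lat s n α) : Lat s (n + 1) (ι × α) where
  D := Fin.cons ((o.χ * o.δ) ⊗ₖ l.Θ) (fun i => 1 ⊗ₖ l.D i)
  X := Fin.cons (o.X ⊗ₖ 1) (fun i => 1 ⊗ₖ l.X i)
  R := Fin.cons ((o.A * o.χ) ⊗ₖ 1) (fun i => o.χ ⊗ₖ l.R i)
  Θ := o.χ ⊗ₖ l.Θ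
  P := o.p ⊗ₖ l.P
  U := o.U ⊗ₖ l.U
  ξ := Fin.cons (fun x => o.ξ x.1) (fun i x => l.ξ i x.2)
  η := fun x => o.η x.1 + l.η x.2
  ΘΘ := by rw [kmul, o.χχ, l.ΘΘ, one_kronecker_one]
  Θt := by rw [kt, o.χt, l.Θt]
  PP := by rw [kmul, o.pp, l.PP, one_kronecker_one]
  Pt := by rw [kt, o.pt, l.Pt]
  PΘ := by rw [kmul, kmul, o.pχ, l.PΘ]
  trP := by rw [trace_kronecker, o.trp, l.trP, mul_one]
  UU := by rw [kt, kmul, o.UU, l.UU, one_kronecker_one]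
  Dt := by
    refine Fin.cases ?_ (fun i => ?_)
    · simp only [Fin.cons_zero]
      rw [kt, transpose_mul, o.χt, o.δt, l.Θt, neg_mul, ← o.χδ]
    · simp only [Fin.cons_succ]
      rw [kt, l.Dt, transpose_one]
  DD := by
    refine Fin.cases (Fin.cases (fun h => absurd rfl h) (fun j _ => ?_))
      (fun i => Fin.cases (fun _ => ?_) (fun j h => ?_)) <;>
      simp only [Fin.cons_zero, Fin.cons_succ, kmul, one_mul, mul_one]
    · rw [l.DΘ, k_neg, neg_neg]
    · rw [l.DΘ, k_neg]
    · rw [l.DD i j (fun e => h (by rw [e])), k_neg]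
  DΘ := by
    refine Fin.cases ?_ (fun i => ?_) <;>
      simp only [Fin.cons_zero, Fin.cons_succ, kmul, one_mul, mul_one]
    · rw [o.χδχ, ← mul_assoc, o.χχ, one_mul, neg_k]
    · rw [l.DΘ, k_neg]
  PD := by
    refine Fin.cases ?_ (fun i => ?_) <;>
      simp only [Fin.cons_zero, Fin.cons_succ, kmul, one_mul, mul_one]
    · rw [← mul_assoc, o.pχ, mul_assoc, o.pδ, mul_neg, neg_k, l.PΘ, mul_assoc]
    · rw [l.PD, k_neg]
  Xt := by
    refine Fin.cases ?_ (fun i => ?_) <;>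
      simp only [Fin.cons_zero, Fin.cons_succ, kt, transpose_one, o.Xt, l.Xt]
  XU := by
    refine Fin.cases ?_ (fun i => ?_)
    · simp only [Fin.cons_zero]
      have : diagonal (fun x : ι × α => o.ξ x.1) = diagonal o.ξ ⊗ₖ (1 : Matrix α α ℝ) := by
        rw [← diagonal_one, diagonal_kronecker_diagonal]; simp
      rw [this, kt, kmul, kmul, ← o.XU, mul_one, l.UU]
    · simp only [Fin.cons_succ]
      have : diagonal (fun x : ι × α => l.ξ i x.2) = (1 : Matrix ι ι ℝ) ⊗ₖ diagonal (l.ξ i) := by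
        rw [← diagonal_one, diagonal_kronecker_diagonal]; simp
      rw [this, kt, kmul, kmul, ← l.XU, mul_one, o.UU]
  XΘ := by
    refine Fin.cases ?_ (fun i => ?_) <;>
      simp only [Fin.cons_zero, Fin.cons_succ, kmul, one_mul, mul_one]
    · rw [o.χX]
    · rw [l.XΘ]
  PX := by
    refine Fin.cases ?_ (fun i => ?_) <;>
      simp only [Fin.cons_zero, Fin.cons_succ, kmul, one_mul, mul_one]
    · rw [o.pX, neg_k]
    · rw [l.PX, k_neg]
  DX := by
    refine Fin.cases (Fin.cases (fun h => absurd rfl h) (fun j _ => ?_))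
      (fun i => Fin.cases (fun _ => ?_) (fun j h => ?_)) <;>
      simp only [Fin.cons_zero, Fin.cons_succ, kmul, one_mul, mul_one]
    · rw [l.XΘ]
    · rw [l.DX i j (fun e => h (by rw [e]))]
  CC := by
    refine Fin.cases ?_ (fun i => ?_) <;>
      simp only [Fin.cons_zero, Fin.cons_succ, kmul, one_mul, mul_one, ← sub_k, ← k_sub]
    · have : o.χ * o.δ * o.X - o.X * (o.χ * o.δ) = o.χ * o.A := by
        rw [← mul_assoc, ← o.χX, ← o.δX]; noncomm_ring
      rw [this, l.ΘΘ, o.χA]; simp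
    · rw [l.CC, o.χχ]
  Rt := by
    refine Fin.cases ?_ (fun i => ?_) <;>
      simp only [Fin.cons_zero, Fin.cons_succ, kt, transpose_one]
    · rw [transpose_mul, o.χt, o.At, o.χA, neg_k]
    · rw [o.χt, l.Rt, k_neg]
  RR := by
    refine Fin.cases (Fin.cases (fun h => absurd rfl h) (fun j _ => ?_))
      (fun i => Fin.cases (fun _ => ?_) (fun j h => ?_)) <;>
      simp only [Fin.cons_zero, Fin.cons_succ, kmul, one_mul, mul_one]
    · rw [← mul_assoc, o.χAχ, mul_assoc, o.χχ, neg_k, neg_neg, mul_one]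
    · rw [← mul_assoc, o.χAχ, mul_assoc, o.χχ, neg_k, mul_one]
    · rw [l.RR i j (fun e => h (by rw [e])), k_neg]
  RΘ := by
    refine Fin.cases ?_ (fun i => ?_) <;>
      simp only [Fin.cons_zero, Fin.cons_succ, kmul, one_mul, mul_one]
    · rw [← mul_assoc, o.χAχ, mul_assoc, o.χχ, neg_k, neg_neg, mul_one]
    · rw [l.RΘ, k_neg]
  PR := by
    refine Fin.cases ?_ (fun i => ?_) <;>
      simp only [Fin.cons_zero, Fin.cons_succ, kmul, one_mul, mul_one]
    · rw [← mul_assoc, o.pA, mul_assoc, o.pχ, mul_assoc]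
    · rw [l.PR, o.pχ]
  RD := by
    refine Fin.cases (Fin.cases (fun h => absurd rfl h) (fun j _ => ?_))
      (fun i => Fin.cases (fun _ => ?_) (fun j h => ?_)) <;>
      simp only [Fin.cons_zero, Fin.cons_succ, kmul, one_mul, mul_one]
    · rw [← mul_assoc, o.χδχ, o.χχ, one_mul, l.RΘ, neg_k, k_neg]
    · rw [l.RD i j (fun e => h (by rw [e]))]
  RX := by
    refine Fin.cases (Fin.cases (fun h => absurd rfl h) (fun j _ => ?_))
      (fun i => Fin.cases (fun _ => ?_) (fun j h => ?_)) <;>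
      simp only [Fin.cons_zero, Fin.cons_succ, kmul, one_mul, mul_one]
    · rw [o.χX]
    · rw [l.RX i j (fun e => h (by rw [e]))]
  RRs := by
    refine Fin.cases ?_ (fun i => ?_) <;>
      simp only [Fin.cons_zero, Fin.cons_succ, kmul, one_mul, mul_one, l.ΘΘ, o.χχ]
    · have h1 : o.A * o.χ * (o.A * o.χ) = -(o.A * o.A) := by
        rw [← mul_assoc, mul_assoc o.A, o.χA]
        simp only [mul_neg, neg_mul, mul_assoc, o.χχ, mul_one]
      have h2 : o.χ * o.δ * (o.χ * o.δ) = -(o.δ * o.δ) := by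
        rw [← mul_assoc, o.χδχ, neg_mul]
      rw [h1, h2, k11, ← add_kronecker, ← smul_kronecker, ← add_kronecker, ← sub_k]
      congr 1
      rw [← sub_eq_add_neg, o.hη, ← o.AA, neg_add_eq_sub]
    · rw [k11, ← kronecker_add, ← kronecker_smul, ← kronecker_add, ← k_sub, l.RRs]
  comD := by
    refine Fin.cases ?_ (fun i => ?_) <;>
      simp only [Fin.cons_zero, Fin.cons_succ, kmul, one_mul, mul_one, ← sub_k, ← k_sub,
        ← smul_kronecker, ← kronecker_smul]
    · have : o.A * o.χ * (o.χ * o.δ) - o.χ * o.δ * (o.A * o.χ) = o.A * o.δ - o.δ * o.A := by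
        rw [← mul_assoc, mul_assoc o.A, o.χχ, mul_one, o.χδ, neg_mul, mul_assoc, ← mul_assoc o.χ,
          o.χAχ]
        simp
      rw [this, o.Aδ, l.ΘΘ]
    · rw [← l.comD, smul_mul_smul_comm, smul_mul_smul_comm, smul_kronecker, kronecker_smul, o.χχ]
  comX := by
    refine Fin.cases ?_ (fun i => ?_) <;>
      simp only [Fin.cons_zero, Fin.cons_succ, kmul, one_mul, mul_one, ← sub_k, ← k_sub,
        ← smul_kronecker, ← kronecker_smul]
    · have : o.A * o.χ * o.X - o.X * (o.A * o.χ) = (o.A * o.X - o.X * o.A) * o.χ := by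
        rw [mul_assoc, o.χX]; noncomm_ring
      rw [this, ← smul_mul_assoc, o.AX, l.ΘΘ, o.χδ]; simp
    · rw [← l.comX, smul_mul_smul_comm, smul_mul_smul_comm, smul_kronecker, kronecker_smul, o.χχ]
  hη := by
    rw [Fin.sum_univ_succ]
    simp only [Fin.cons_zero, Fin.cons_succ, kmul, one_mul, mul_one, l.ΘΘ]
    have h2 : o.χ * o.δ * (o.χ * o.δ) = -(o.δ * o.δ) := by
      rw [← mul_assoc, o.χδχ, neg_mul]
    rw [h2, ← add_kronecker, ← sub_eq_add_neg, o.hη]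
    simp only [← kronecker_add]
    rw [← k_sum, l.hη, ← diagonal_one, ← diagonal_one, diagonal_kronecker_diagonal,
      diagonal_kronecker_diagonal, diagonal_add]
    simp
  η0 := fun x => add_nonneg (o.η0 _) (l.η0 _)
  ηc := fun K => by
    have hsub : (Finset.univ.filter (fun x : ι × α => o.η x.1 + l.η x.2 < K)) ⊆
        (Finset.univ.filter (fun i => o.η i < K)) ×ˢ (Finset.univ.filter (fun a => l.η a < K)) := by
      intro x hx
      simp only [Finset.mem_filter, Finset.mem_univ, true_and, Finset.mem_product] at hx ⊢
      have h1 := o.η0 x.1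
      have h2 := l.η0 x.2
      constructor <;> linarith
    calc _ ≤ _ := Finset.card_le_card hsub
      _ = _ := Finset.card_product _ _
      _ ≤ (2 * K) * (2 * K) ^ n := Nat.mul_le_mul (o.ηc K) (l.ηc K)
      _ = _ := by ring
end step

theorem exists_lat (s : ℕ) (hs : 1 ≤ s) (n : ℕ) :
    ∃ (α : Type) (_ : Fintype α) (_ : DecidableEq α), Nonempty (Lat s n α) := by
  induction n with
  | zero => exact ⟨Unit, inferInstance, inferInstance, ⟨Lat.zero s⟩⟩
  | succ n ih =>
    obtain ⟨α, i1, i2, ⟨l⟩⟩ := ih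
    exact ⟨Fin (2*s+1) × α, inferInstance, inferInstance, ⟨Lat.succ (one s hs) l⟩⟩

end HRN


namespace HRN
open Matrix Kronecker

section psd
variable {γ : Type} [Fintype γ] [DecidableEq γ]

lemma psd_tm (M : Matrix γ γ ℝ) : (Mᵀ * M).PosSemidef := by
  have := posSemidef_conjTranspose_mul_self M
  rwa [conjTranspose_eq_transpose_of_trivial] at this

lemma psd_sq (M : Matrix γ γ ℝ) (h : Mᵀ = M) : (M * M).PosSemidef := by
  have := psd_tm M
  rwa [h] at this

lemma psd_smul {M : Matrix γ γ ℝ} (h : M.PosSemidef) {c : ℝ} (hc : 0 ≤ c) :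
    (c • M).PosSemidef := h.smul hc

lemma psd_one : (1 : Matrix γ γ ℝ).PosSemidef := PosSemidef.one

lemma psd_sum {κ : Type} (S : Finset κ) (M : κ → Matrix γ γ ℝ) (h : ∀ i ∈ S, (M i).PosSemidef) :
    (∑ i ∈ S, M i).PosSemidef := posSemidef_sum S h

lemma psd_conj {M : Matrix γ γ ℝ} (h : M.PosSemidef) (U : Matrix γ γ ℝ) :
    (Uᵀ * M * U).PosSemidef := by
  have := h.conjTranspose_mul_mul_same U
  rwa [conjTranspose_eq_transpose_of_trivial] at this
end psd

structure Tgt (n N : ℕ) (τ c : ℝ) (W : Type) [Fintype W] [DecidableEq W] where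
  ε : Matrix W W ℝ
  t : Fin n → Matrix W W ℝ
  I : Matrix W W ℝ
  J : Matrix W W ℝ
  εε : ε * ε = 1
  εt : εᵀ = ε
  tε : ∀ i, t i * ε = -(ε * t i)
  tt : ∀ i, (t i)ᵀ = t i
  II : I * I = -1
  JJ : J * J = -1
  IJ : I * J = -(J * I)
  It : Iᵀ = -I
  Jt : Jᵀ = -J
  Iε : I * ε = ε * I
  Jε : J * ε = ε * J
  Itt : ∀ i, I * t i = t i * I
  Jtt : ∀ i, J * t i = t i * J
  cW : Fintype.card W = 8 * N
  τ0 : 0 ≤ τ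
  hτ : ∀ i, (τ • 1 - t i * t i).PosSemidef
  c0 : 0 < c
  c1 : c ≤ 1
  hc : ∀ x : Fin n → ℝ, ((∑ i, x i • t i) * (∑ i, x i • t i) - (c * ∑ i, x i * x i) • 1).PosSemidef

structure Big (s n N : ℕ) (b c z : ℝ) (γ : Type) [Fintype γ] [DecidableEq γ] where
  T : Matrix γ γ ℝ
  G : Matrix γ γ ℝ
  P : Matrix γ γ ℝ
  I : Matrix γ γ ℝ
  J : Matrix γ γ ℝ
  R : Fin n → Matrix γ γ ℝ
  h : γ → ℝ
  Tt : Tᵀ = T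
  GG : G * G = 1
  Gt : Gᵀ = G
  GT : G * T = -(T * G)
  PP : P * P = 1
  Pt : Pᵀ = P
  PT : P * T = -(T * P)
  PG : P * G = G * P
  trP : P.trace = 8 * N
  II : I * I = -1
  JJ : J * J = -1
  IJ : I * J = -(J * I)
  It : Iᵀ = -I
  Jt : Jᵀ = -J
  IT : I * T = T * I
  JT : J * T = T * J
  IG : I * G = G * I
  JG : J * G = G * J
  IP : I * P = P * I
  JP : J * P = P * J
  IR : ∀ i, I * R i = R i * I
  JR : ∀ i, J * R i = R i * J
  Rt : ∀ i, (R i)ᵀ = -R i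
  PR : ∀ i, P * R i = R i * P
  GR : ∀ i, G * R i = -(R i * G)
  RR : ∀ i j, i ≠ j → R i * R j = -(R j * R i)
  ha : (T * T + b • 1 - c • diagonal h).PosSemidef
  hb : ∀ i, ((2 : ℝ) • 1 + R i * R i).PosSemidef
  hz : ∀ i, (z • diagonal h - ((s : ℝ) • (R i * T - T * R i))ᵀ * ((s : ℝ) • (R i * T - T * R i))).PosSemidef
  hd1 : ∀ i, ((s : ℝ) • (R i * R i + 1) + 1).PosSemidef
  hd2 : ∀ i, (diagonal h - ((s : ℝ) • (R i * R i + 1) + 1)).PosSemidef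
  h0 : ∀ a, 0 ≤ h a
  hcard : ∀ K : ℕ, (Finset.univ.filter (fun a => h a < K)).card ≤ (2 * K) ^ n * (8 * N)

lemma sum_sq_anti {R κ : Type} [Ring R] (S : Finset κ) (a : κ → R)
    (h : ∀ i j, i ≠ j → a i * a j = -(a j * a i)) :
    (∑ i ∈ S, a i) * (∑ i ∈ S, a i) = ∑ i ∈ S, a i * a i := by
  classical
  induction S using Finset.induction_on with
  | empty => simp
  | insert k S hk ih =>
    have e : a k * (∑ i ∈ S, a i) + (∑ i ∈ S, a i) * a k = 0 := by
      rw [Finset.mul_sum, Finset.sum_mul, ← Finset.sum_add_distrib]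
      apply Finset.sum_eq_zero
      intro i hi
      rw [h k i (fun e => hk (e ▸ hi)), neg_add_cancel]
    rw [Finset.sum_insert hk, Finset.sum_insert hk, ← ih]
    calc _ = a k * a k + (a k * (∑ i ∈ S, a i) + (∑ i ∈ S, a i) * a k) +
        (∑ i ∈ S, a i) * (∑ i ∈ S, a i) := by noncomm_ring
      _ = _ := by rw [e, add_zero]

section build
variable {s n N : ℕ} {τ c : ℝ} {α W : Type} [Fintype α] [Fintype W] [DecidableEq α] [DecidableEq W]

lemma Lat.r2 (hs : 1 ≤ s) (l : Lat s n α) (i : Fin n) : ((2:ℝ) • 1 + l.R i * l.R i).PosSemidef := by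
  have hs0 : (0:ℝ) < s := by positivity
  have h1 : (1:ℝ) ≤ s := by exact_mod_cast hs
  have e : (2:ℝ) • 1 + l.R i * l.R i =
      (1 / (s:ℝ)) • (l.X i * l.X i + l.D i * l.D i) + (1 - 1 / (s:ℝ)) • (1 : Matrix α α ℝ) := by
    have := l.RRs i
    rw [eq_sub_iff_add_eq] at this
    rw [← this, smul_add, smul_smul, one_div_mul_cancel hs0.ne']
    module
  rw [e]
  refine (psd_smul ((psd_sq _ (l.Xt i)).add (psd_sq _ (l.Dt i))) (by positivity)).add
    (psd_smul psd_one ?_)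
  rw [sub_nonneg, div_le_one hs0]; exact h1

lemma Lat.fam (l : Lat s n α) (g : Tgt n N τ c W) :
    ((∑ i, l.X i ⊗ₖ g.t i) * (∑ i, l.X i ⊗ₖ g.t i) -
      c • ((∑ i, l.X i * l.X i) ⊗ₖ (1 : Matrix W W ℝ))).PosSemidef := by
  let E : α → Matrix α α ℝ := fun a => diagonal (Pi.single a 1)
  have hE : ∀ a b, E a * E b = if a = b then E a else 0 := by
    intro a b
    simp only [E, diagonal_mul_diagonal]
    split_ifs with h
    · subst h; congr 1; ext x; by_cases hx : x = a <;> simp [Pi.single_apply, hx]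
    · rw [← diagonal_zero]; congr 1; ext x; by_cases hx : x = a <;> simp [Pi.single_apply, hx, h]
  have hdiag : ∀ f : α → ℝ, diagonal f = ∑ a, f a • E a := by
    intro f
    ext x y
    rw [Matrix.sum_apply]
    simp only [E, Matrix.smul_apply, diagonal_apply]
    by_cases hxy : x = y
    · subst hxy; simp [Pi.single_apply]
    · simp [hxy]
  have hEp : ∀ a, (E a).PosSemidef := by
    intro a
    apply PosSemidef.diagonal
    intro x
    by_cases hx : x = a <;> simp [Pi.single_apply, hx]
  set V : Matrix (α × W) (α × W) ℝ := l.U ⊗ₖ 1 with hV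
  have hUU' : l.U * l.Uᵀ = 1 := mul_eq_one_comm.1 l.UU
  set Tt : α → Matrix W W ℝ := fun a => ∑ i, l.ξ i a • g.t i with hT
  have e1 : (∑ i, l.X i ⊗ₖ g.t i) = Vᵀ * (∑ a, E a ⊗ₖ Tt a) * V := by
    have : (∑ a, E a ⊗ₖ Tt a) = ∑ i, diagonal (l.ξ i) ⊗ₖ g.t i := by
      simp only [hdiag (l.ξ _), hT, k_sum, sum_k, kronecker_smul, smul_kronecker]
      rw [Finset.sum_comm]
    rw [this, Finset.mul_sum, Finset.sum_mul]
    refine Finset.sum_congr rfl fun i _ => ?_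
    rw [hV, kt, kmul, kmul, ← l.XU, transpose_one, one_mul, mul_one]
  have hVV : V * Vᵀ = 1 := by rw [hV, kt, kmul, hUU', transpose_one, one_mul, one_kronecker_one]
  have e2 : (∑ a, E a ⊗ₖ Tt a) * (∑ a, E a ⊗ₖ Tt a) = ∑ a, E a ⊗ₖ (Tt a * Tt a) := by
    rw [Finset.sum_mul]
    refine Finset.sum_congr rfl fun a _ => ?_
    rw [Finset.mul_sum, Finset.sum_eq_single a]
    · rw [kmul, hE, if_pos rfl]
    · intro b _ hb
      rw [kmul, hE, if_neg hb.symm, zero_kronecker]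
    · simp
  have e3 : (∑ i, l.X i * l.X i) ⊗ₖ (1 : Matrix W W ℝ) =
      Vᵀ * (∑ a, E a ⊗ₖ ((∑ i, l.ξ i a * l.ξ i a) • (1 : Matrix W W ℝ))) * V := by
    have : (∑ a, E a ⊗ₖ ((∑ i, l.ξ i a * l.ξ i a) • (1 : Matrix W W ℝ))) =
        ∑ i, (diagonal (l.ξ i) * diagonal (l.ξ i)) ⊗ₖ (1 : Matrix W W ℝ) := by
      simp only [diagonal_mul_diagonal, hdiag (fun x => l.ξ _ x * l.ξ _ x), sum_k,
        kronecker_smul, smul_kronecker, Finset.sum_smul, k_sum]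
      rw [Finset.sum_comm]
    rw [this, Finset.mul_sum, Finset.sum_mul, sum_k]
    refine Finset.sum_congr rfl fun i _ => ?_
    rw [hV, kt, kmul, kmul, transpose_one, one_mul, mul_one]
    congr 1
    rw [l.XU i]
    calc l.Uᵀ * diagonal (l.ξ i) * l.U * (l.Uᵀ * diagonal (l.ξ i) * l.U)
        = l.Uᵀ * diagonal (l.ξ i) * (l.U * l.Uᵀ) * (diagonal (l.ξ i) * l.U) := by noncomm_ring
      _ = _ := by rw [hUU']; noncomm_ring
  have e4 : (∑ i, l.X i ⊗ₖ g.t i) * (∑ i, l.X i ⊗ₖ g.t i) =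
      Vᵀ * (∑ a, E a ⊗ₖ (Tt a * Tt a)) * V := by
    rw [e1, ← e2]
    generalize (∑ a, E a ⊗ₖ Tt a) = Q
    calc Vᵀ * Q * V * (Vᵀ * Q * V) = Vᵀ * Q * (V * Vᵀ) * (Q * V) := by noncomm_ring
      _ = _ := by rw [hVV]; noncomm_ring
  rw [e3, e4, ← smul_mul_assoc, ← mul_smul_comm, ← sub_mul, ← mul_sub]
  apply psd_conj
  rw [Finset.smul_sum, ← Finset.sum_sub_distrib]
  apply psd_sum
  intro a _
  rw [← kronecker_smul, ← k_sub, smul_smul]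
  exact (hEp a).kronecker (g.hc _)

noncomputable def Lat.T (l : Lat s n α) (g : Tgt n N τ c W) : Matrix (α × W) (α × W) ℝ :=
  (∑ i, l.D i) ⊗ₖ g.ε + ∑ i, l.X i ⊗ₖ g.t i

lemma Lat.SX (l : Lat s n α) (i : Fin n) : (∑ j, l.D j) * l.X i - l.X i * (∑ j, l.D j) =
    l.D i * l.X i - l.X i * l.D i := by
  rw [Finset.sum_mul, Finset.mul_sum, ← Finset.sum_sub_distrib, Finset.sum_eq_single i]
  · intro j _ hj
    rw [l.DX j i hj, sub_self]
  · simp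

lemma Lat.TT (l : Lat s n α) (g : Tgt n N τ c W) : l.T g * l.T g =
    (∑ i, l.D i * l.D i) ⊗ₖ 1 + (∑ i, l.X i ⊗ₖ g.t i) * (∑ i, l.X i ⊗ₖ g.t i) +
    ∑ i, (l.D i * l.X i - l.X i * l.D i) ⊗ₖ (g.ε * g.t i) := by
  unfold Lat.T
  have h1 : (∑ i, l.D i) ⊗ₖ g.ε * (∑ i, l.D i) ⊗ₖ g.ε = (∑ i, l.D i * l.D i) ⊗ₖ 1 := by
    rw [kmul, g.εε, sum_sq_anti _ _ l.DD]
  have h2 : (∑ i, l.D i) ⊗ₖ g.ε * (∑ i, l.X i ⊗ₖ g.t i) + (∑ i, l.X i ⊗ₖ g.t i) *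
      (∑ i, l.D i) ⊗ₖ g.ε = ∑ i, (l.D i * l.X i - l.X i * l.D i) ⊗ₖ (g.ε * g.t i) := by
    rw [Finset.mul_sum, Finset.sum_mul, ← Finset.sum_add_distrib]
    refine Finset.sum_congr rfl fun i _ => ?_
    rw [kmul, kmul, g.tε, k_neg, ← l.SX, sub_k, sub_eq_add_neg]
  rw [← h1, ← h2]
  noncomm_ring

lemma Lat.ha (hs : 1 ≤ s) (l : Lat s n α) (g : Tgt n N τ c W) :
    (l.T g * l.T g + (n * ((2 + τ) / 2)) • 1 - c • (diagonal l.η ⊗ₖ 1)).PosSemidef := by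
  have e : l.T g * l.T g + (n * ((2 + τ) / 2)) • 1 - c • (diagonal l.η ⊗ₖ 1) =
      ((1 - c) • ∑ i, l.D i * l.D i) ⊗ₖ 1 + ((∑ i, l.X i ⊗ₖ g.t i) * (∑ i, l.X i ⊗ₖ g.t i) -
      c • ((∑ i, l.X i * l.X i) ⊗ₖ (1 : Matrix W W ℝ))) +
      ∑ i, ((l.D i * l.X i - l.X i * l.D i) ⊗ₖ (g.ε * g.t i) + ((2 + τ) / 2) • 1) := by
    rw [l.TT g, ← l.hη, Finset.sum_add_distrib, Finset.sum_add_distrib, add_kronecker,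
      smul_kronecker]
    simp only [Finset.sum_const, Finset.card_univ, Fintype.card_fin]
    rw [← Nat.cast_smul_eq_nsmul ℝ n, smul_smul]
    module
  rw [e]
  refine (PosSemidef.add ?_ (l.fam g)).add (psd_sum _ _ fun i _ => ?_)
  · apply PosSemidef.kronecker _ psd_one
    exact psd_smul (psd_sum _ _ fun i _ => psd_sq _ (l.Dt i)) (by linarith [g.c1])
  · set C := l.D i * l.X i - l.X i * l.D i with hC
    have Ct : Cᵀ = -C := by
      rw [hC, transpose_sub, transpose_mul, transpose_mul, l.Dt, l.Xt, neg_sub]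
    set κ := g.ε * g.t i with hκ
    have κt : κᵀ = -κ := by
      rw [hκ, transpose_mul, g.εt, g.tt, g.tε]
    have κκ : κ * κ = -(g.t i * g.t i) := by
      have : g.ε * g.t i * (g.ε * g.t i) = g.ε * (g.t i * g.ε) * g.t i := by noncomm_ring
      rw [hκ, this, g.tε]
      have : g.ε * -(g.ε * g.t i) * g.t i = -((g.ε * g.ε) * g.t i * g.t i) := by noncomm_ring
      rw [this, g.εε, one_mul]
    set M : Matrix (α × W) (α × W) ℝ := C ⊗ₖ 1 - 1 ⊗ₖ κ with hM
    have Mt : Mᵀ = -M := by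
      rw [hM, transpose_sub, kt, kt, Ct, κt, transpose_one, transpose_one, neg_k, k_neg]; abel
    have MM : Mᵀ * M = (2:ℝ) • (C ⊗ₖ κ) - (l.R i * l.R i) ⊗ₖ 1 + 1 ⊗ₖ (g.t i * g.t i) := by
      rw [Mt, hM, neg_mul, sub_mul, mul_sub, mul_sub, kmul, kmul, kmul, kmul]
      simp only [one_mul, mul_one]
      rw [κκ, k_neg, hC, l.CC]
      module
    have e2 : C ⊗ₖ κ + ((2 + τ) / 2) • (1 : Matrix (α × W) (α × W) ℝ) = (1/2 : ℝ) • (Mᵀ * M +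
        ((2:ℝ) • 1 + l.R i * l.R i) ⊗ₖ 1 + 1 ⊗ₖ (τ • 1 - g.t i * g.t i)) := by
      rw [MM, add_kronecker, k_sub, smul_kronecker, kronecker_smul, one_kronecker_one]
      module
    rw [e2]
    exact psd_smul (((psd_tm M).add ((l.r2 hs i).kronecker psd_one)).add
      (psd_one.kronecker (g.hτ i))) (by norm_num)

lemma Lat.RT (l : Lat s n α) (g : Tgt n N τ c W) (i : Fin n) :
    (s:ℝ) • (l.R i ⊗ₖ 1 * l.T g - l.T g * l.R i ⊗ₖ 1) =
    ((s:ℝ) • (l.R i * l.D i - l.D i * l.R i)) ⊗ₖ g.ε +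
      ((s:ℝ) • (l.R i * l.X i - l.X i * l.R i)) ⊗ₖ g.t i := by
  rw [smul_kronecker, smul_kronecker, ← smul_add]
  congr 1
  unfold Lat.T
  have h1 : l.R i * (∑ j, l.D j) - (∑ j, l.D j) * l.R i = l.R i * l.D i - l.D i * l.R i := by
    rw [Finset.sum_mul, Finset.mul_sum, ← Finset.sum_sub_distrib, Finset.sum_eq_single i]
    · intro j _ hj
      rw [l.RD i j hj.symm, sub_self]
    · simp
  have h2 : l.R i ⊗ₖ 1 * (∑ j, l.X j ⊗ₖ g.t j) - (∑ j, l.X j ⊗ₖ g.t j) * l.R i ⊗ₖ 1 =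
      (l.R i * l.X i - l.X i * l.R i) ⊗ₖ g.t i := by
    rw [Finset.sum_mul, Finset.mul_sum, ← Finset.sum_sub_distrib, Finset.sum_eq_single i]
    · rw [kmul, kmul, one_mul, mul_one, sub_k]
    · intro j _ hj
      rw [kmul, kmul, one_mul, mul_one, l.RX i j hj.symm, sub_self]
    · simp
  rw [← h2, ← h1, mul_add, add_mul, kmul, kmul, one_mul, mul_one, sub_k]
  abel

lemma Lat.hrest (l : Lat s n α) (i : Fin n) :
    (diagonal l.η - (l.X i * l.X i + l.D i * l.D i)).PosSemidef := by
  rw [← l.hη, ← Finset.add_sum_erase _ _ (Finset.mem_univ i), add_sub_cancel_left]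
  exact psd_sum _ _ fun j _ => (psd_sq _ (l.Xt j)).add (psd_sq _ (l.Dt j))

lemma Lat.hz (l : Lat s n α) (g : Tgt n N τ c W) (i : Fin n) :
    ((2 * (1 + τ)) • (diagonal l.η ⊗ₖ 1) - ((s:ℝ) • (l.R i ⊗ₖ 1 * l.T g - l.T g * l.R i ⊗ₖ 1))ᵀ *
      ((s:ℝ) • (l.R i ⊗ₖ 1 * l.T g - l.T g * l.R i ⊗ₖ 1))).PosSemidef := by
  rw [l.RT g]
  set F := (s:ℝ) • (l.R i * l.D i - l.D i * l.R i) with hF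
  set E := (s:ℝ) • (l.R i * l.X i - l.X i * l.R i) with hE
  have Ft : Fᵀ = F := by
    rw [hF, transpose_smul, transpose_sub, transpose_mul, transpose_mul, l.Rt, l.Dt]
    congr 1; noncomm_ring
  have Et : Eᵀ = E := by
    rw [hE, transpose_smul, transpose_sub, transpose_mul, transpose_mul, l.Rt, l.Xt]
    congr 1; noncomm_ring
  have FF : F * F = l.X i * l.X i := l.comD i
  have EE : E * E = l.D i * l.D i := l.comX i
  set a := F ⊗ₖ g.ε
  set b := E ⊗ₖ g.t i
  have at' : aᵀ = a := by rw [kt, Ft, g.εt]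
  have bt' : bᵀ = b := by rw [kt, Et, g.tt]
  have aa : a * a = (l.X i * l.X i) ⊗ₖ 1 := by rw [kmul, FF, g.εε]
  have bb : b * b = (l.D i * l.D i) ⊗ₖ (g.t i * g.t i) := by rw [kmul, EE]
  have e : (2 * (1 + τ)) • (diagonal l.η ⊗ₖ 1) - (a + b)ᵀ * (a + b) =
      (a - b)ᵀ * (a - b) + (2:ℝ) • ((l.D i * l.D i) ⊗ₖ (τ • 1 - g.t i * g.t i)) +
      (2 * (1 + τ)) • ((diagonal l.η - (l.X i * l.X i + l.D i * l.D i)) ⊗ₖ 1) +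
      (2 * τ) • ((l.X i * l.X i) ⊗ₖ 1) + (2:ℝ) • ((l.D i * l.D i) ⊗ₖ 1) := by
    have h1 : (a + b)ᵀ * (a + b) = (2:ℝ) • (a * a) + (2:ℝ) • (b * b) - (a - b)ᵀ * (a - b) := by
      rw [transpose_add, transpose_sub, at', bt', two_smul, two_smul]; noncomm_ring
    rw [h1, aa, bb, k_sub, sub_k, add_kronecker, kronecker_smul]
    module
  rw [e]
  have τ0 := g.τ0
  have pD := psd_sq _ (l.Dt i)
  have pX := psd_sq _ (l.Xt i)
  exact ((((psd_tm _).add (psd_smul (pD.kronecker (g.hτ i)) (by norm_num))).add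
    (psd_smul ((l.hrest i).kronecker psd_one) (by positivity))).add
    (psd_smul (pX.kronecker psd_one) (by positivity))).add
    (psd_smul (pD.kronecker psd_one) (by norm_num))

noncomputable def Lat.big (hs : 1 ≤ s) (l : Lat s n α) (g : Tgt n N τ c W) :
    Big s n N (n * ((2 + τ) / 2)) c (2 * (1 + τ)) (α × W) :=
  have hdiag : diagonal (fun x : α × W => l.η x.1) = diagonal l.η ⊗ₖ (1 : Matrix W W ℝ) := by
    rw [← diagonal_one, diagonal_kronecker_diagonal]; simp
  have hSt : (∑ i, l.D i)ᵀ = ∑ i, l.D i := by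
    rw [transpose_sum]; exact Finset.sum_congr rfl fun i _ => l.Dt i
  have hSΘ : l.Θ * (∑ i, l.D i) = -((∑ i, l.D i) * l.Θ) := by
    rw [Finset.sum_mul, Finset.mul_sum, ← Finset.sum_neg_distrib]
    exact Finset.sum_congr rfl fun i _ => by rw [l.DΘ, neg_neg]
  have hPS : l.P * (∑ i, l.D i) = -((∑ i, l.D i) * l.P) := by
    rw [Finset.sum_mul, Finset.mul_sum, ← Finset.sum_neg_distrib]
    exact Finset.sum_congr rfl fun i _ => l.PD i
  have hd : ∀ i, (s:ℝ) • (l.R i ⊗ₖ 1 * l.R i ⊗ₖ 1 + 1) + 1 =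
      (l.X i * l.X i + l.D i * l.D i) ⊗ₖ (1 : Matrix W W ℝ) := by
    intro i
    rw [kmul, mul_one, k11, ← add_kronecker, ← smul_kronecker, ← add_kronecker, l.RRs,
      sub_add_cancel]
  { T := l.T g
    G := l.Θ ⊗ₖ g.ε
    P := l.P ⊗ₖ 1
    I := 1 ⊗ₖ g.I
    J := 1 ⊗ₖ g.J
    R := fun i => l.R i ⊗ₖ 1
    h := fun x => l.η x.1
    Tt := by
      rw [Lat.T, transpose_add, kt, hSt, g.εt, transpose_sum]
      simp only [kt, l.Xt, g.tt]
    GG := by rw [kmul, l.ΘΘ, g.εε, one_kronecker_one]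
    Gt := by rw [kt, l.Θt, g.εt]
    GT := by
      rw [Lat.T, mul_add, add_mul, kmul, kmul, hSΘ, neg_k, Finset.mul_sum _ (fun i => l.X i ⊗ₖ g.t i),
        Finset.sum_mul _ (fun i => l.X i ⊗ₖ g.t i), neg_add,
        ← Finset.sum_neg_distrib]
      congr 1
      refine Finset.sum_congr rfl fun i _ => ?_
      rw [kmul, kmul, l.XΘ, g.tε, k_neg, neg_neg]
    PP := by rw [kmul, l.PP, one_mul, one_kronecker_one]
    Pt := by rw [kt, l.Pt, transpose_one]
    PT := by
      rw [Lat.T, mul_add, add_mul, kmul, kmul, hPS, neg_k, Finset.mul_sum _ (fun i => l.X i ⊗ₖ g.t i),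
        Finset.sum_mul _ (fun i => l.X i ⊗ₖ g.t i), neg_add,
        ← Finset.sum_neg_distrib, one_mul, mul_one]
      congr 1
      refine Finset.sum_congr rfl fun i _ => ?_
      rw [kmul, kmul, l.PX, neg_k, one_mul, mul_one]
    PG := by rw [kmul, kmul, l.PΘ, one_mul, mul_one]
    trP := by
      rw [trace_kronecker, l.trP, trace_one, g.cW]; push_cast; ring
    II := by rw [kmul, g.II, k_neg, one_mul, one_kronecker_one]
    JJ := by rw [kmul, g.JJ, k_neg, one_mul, one_kronecker_one]
    IJ := by rw [kmul, kmul, g.IJ, k_neg]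
    It := by rw [kt, g.It, k_neg, transpose_one]
    Jt := by rw [kt, g.Jt, k_neg, transpose_one]
    IT := by
      rw [Lat.T, mul_add, add_mul, kmul, kmul, Finset.mul_sum _ (fun i => l.X i ⊗ₖ g.t i),
        Finset.sum_mul _ (fun i => l.X i ⊗ₖ g.t i), g.Iε]
      simp only [kmul, g.Itt, one_mul, mul_one]
    JT := by
      rw [Lat.T, mul_add, add_mul, kmul, kmul, Finset.mul_sum _ (fun i => l.X i ⊗ₖ g.t i),
        Finset.sum_mul _ (fun i => l.X i ⊗ₖ g.t i), g.Jε]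
      simp only [kmul, g.Jtt, one_mul, mul_one]
    IG := by rw [kmul, kmul, g.Iε, one_mul, mul_one]
    JG := by rw [kmul, kmul, g.Jε, one_mul, mul_one]
    IP := by simp only [kmul, one_mul, mul_one]
    JP := by simp only [kmul, one_mul, mul_one]
    IR := fun i => by simp only [kmul, one_mul, mul_one]
    JR := fun i => by simp only [kmul, one_mul, mul_one]
    Rt := fun i => by rw [kt, l.Rt, neg_k, transpose_one]
    PR := fun i => by rw [kmul, kmul, l.PR]
    GR := fun i => by rw [kmul, kmul, l.RΘ, neg_k, neg_neg, one_mul, mul_one]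
    RR := fun i j h => by rw [kmul, kmul, l.RR i j h, neg_k]
    ha := by rw [hdiag]; exact l.ha hs g
    hb := fun i => by
      rw [kmul, mul_one, k11, ← smul_kronecker, ← add_kronecker]
      exact (l.r2 hs i).kronecker psd_one
    hz := fun i => by rw [hdiag]; exact l.hz g i
    hd1 := fun i => by
      rw [hd]
      exact ((psd_sq _ (l.Xt i)).add (psd_sq _ (l.Dt i))).kronecker psd_one
    hd2 := fun i => by
      rw [hd, hdiag, ← sub_k]
      exact (l.hrest i).kronecker psd_one
    h0 := fun a => l.η0 _
    hcard := fun K => by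
      have : (Finset.univ.filter (fun x : α × W => l.η x.1 < K)) =
          (Finset.univ.filter (fun a => l.η a < K)) ×ˢ Finset.univ := by
        ext x; simp
      rw [this, Finset.card_product, Finset.card_univ, g.cW]
      exact Nat.mul_le_mul_right _ (l.ηc K) }
end build

theorem exists_big {n N : ℕ} {τ c : ℝ} {W : Type} [Fintype W] [DecidableEq W]
    (g : Tgt n N τ c W) (s : ℕ) (hs : 1 ≤ s) :
    ∃ (γ : Type) (_ : Fintype γ) (_ : DecidableEq γ),
      Nonempty (Big s n N (n * ((2 + τ) / 2)) c (2 * (1 + τ)) γ) := by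
  obtain ⟨α, i1, i2, ⟨l⟩⟩ := exists_lat s hs n
  exact ⟨α × W, inferInstance, inferInstance, ⟨l.big hs g⟩⟩

end HRN


namespace HRN
open Matrix

structure Dg (s n N : ℕ) (C : ℝ) (L : ℕ) (γ : Type) [Fintype γ] [DecidableEq γ] where
  lam : γ → ℝ
  G : Matrix γ γ ℝ
  P : Matrix γ γ ℝ
  I : Matrix γ γ ℝ
  J : Matrix γ γ ℝ
  R : Fin n → Matrix γ γ ℝ
  GG : G * G = 1
  Gt : Gᵀ = G
  GT : ∀ a b, G a b * (lam a + lam b) = 0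
  PP : P * P = 1
  Pt : Pᵀ = P
  PT : ∀ a b, P a b * (lam a + lam b) = 0
  PG : P * G = G * P
  trP : P.trace = 8 * N
  II : I * I = -1
  JJ : J * J = -1
  IJ : I * J = -(J * I)
  It : Iᵀ = -I
  Jt : Jᵀ = -J
  IT : ∀ a b, I a b * (lam a - lam b) = 0
  JT : ∀ a b, J a b * (lam a - lam b) = 0
  IG : I * G = G * I
  JG : J * G = G * J
  IP : I * P = P * I
  JP : J * P = P * J
  IR : ∀ i, I * R i = R i * I
  JR : ∀ i, J * R i = R i * J
  Rt : ∀ i, (R i)ᵀ = -R i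
  PR : ∀ i, P * R i = R i * P
  GR : ∀ i, G * R i = -(R i * G)
  RR : ∀ i j, i ≠ j → R i * R j = -(R j * R i)
  hb : ∀ i a, ∑ b, R i b a ^ 2 ≤ 2
  hz : ∀ i a, |lam a| ≤ 1 → s ^ 2 * ∑ b, ((lam a - lam b) * R i b a) ^ 2 ≤ C
  hd : ∀ i a b, |lam a| ≤ 1 → |lam b| ≤ 1 → s * |(R i * R i + 1) a b| ≤ C
  hL : (Finset.univ.filter (fun a => |lam a| ≤ 1)).card ≤ L

section
variable {γ : Type} [Fintype γ] [DecidableEq γ]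

lemma psd_entry {M : Matrix γ γ ℝ} (h : M.PosSemidef) (a b : γ) :
    |M a b| ≤ (M a a + M b b) / 2 := by
  have hs : M b a = M a b := by
    have := h.1
    have := congrFun (congrFun this a) b
    simpa [conjTranspose_apply] using this
  have key : ∀ e : ℝ, 0 ≤ M a a + 2 * e * M a b + e * e * M b b := by
    intro e
    have := h.dotProduct_mulVec_nonneg (Pi.single a 1 + e • Pi.single b 1)
    simp [mulVec_add, mulVec_smul, dotProduct_add, add_dotProduct, smul_dotProduct] at this
    rw [hs] at this
    nlinarith [this]
  have h1 := key 1
  have h2 := key (-1)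
  rw [abs_le]
  constructor <;> linarith

def conjHom (U : Matrix γ γ ℝ) (h : Uᵀ * U = 1) : Matrix γ γ ℝ →ₐ[ℝ] Matrix γ γ ℝ :=
  AlgHom.ofLinearMap
    { toFun := fun M => U * M * Uᵀ
      map_add' := fun x y => by rw [mul_add, add_mul]
      map_smul' := fun c x => by simp }
    (by simp [mul_eq_one_comm.1 h])
    (by
      intro x y
      show U * (x * y) * Uᵀ = U * x * Uᵀ * (U * y * Uᵀ)
      calc _ = U * x * 1 * (y * Uᵀ) := by noncomm_ring
        _ = U * x * (Uᵀ * U) * (y * Uᵀ) := by rw [h]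
        _ = _ := by noncomm_ring)

lemma conjHom_apply (U : Matrix γ γ ℝ) (h : Uᵀ * U = 1) (M) : conjHom U h M = U * M * Uᵀ := rfl

lemma conjHom_t (U : Matrix γ γ ℝ) (h : Uᵀ * U = 1) (M) :
    (conjHom U h M)ᵀ = conjHom U h Mᵀ := by
  simp only [conjHom_apply, transpose_mul, transpose_transpose, mul_assoc]

lemma conjHom_tr (U : Matrix γ γ ℝ) (h : Uᵀ * U = 1) (M) :
    (conjHom U h M).trace = M.trace := by
  rw [conjHom_apply, trace_mul_comm, ← mul_assoc, h, one_mul]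

lemma conjHom_psd (U : Matrix γ γ ℝ) (h : Uᵀ * U = 1) {M : Matrix γ γ ℝ} (hM : M.PosSemidef) :
    (conjHom U h M).PosSemidef := by
  have := psd_conj hM Uᵀ
  rwa [transpose_transpose] at this

theorem Big.dg {s n N K : ℕ} {b c z : ℝ} (B : Big s n N b c z γ) (hs : 1 ≤ s) (hb0 : 0 ≤ b)
    (hc : 0 < c) (hz0 : 0 ≤ z) (hK : 2 * (1 + b) ≤ c * K) :
    Nonempty (Dg s n N (max (z * ((1 + b) / c)) ((1 + b) / c + 1)) (2 * ((2 * K) ^ n * (8 * N))) γ) := by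
  obtain ⟨U, lam, hU, hT⟩ := exists_diag B.T B.Tt
  have hU' : U * Uᵀ = 1 := mul_eq_one_comm.1 hU
  set φ := conjHom U hU with hφ
  have hφT : φ B.T = diagonal lam := by
    rw [hφ, conjHom_apply, hT]
    calc _ = (U * Uᵀ) * diagonal lam * (U * Uᵀ) := by noncomm_ring
      _ = _ := by rw [hU', one_mul, mul_one]
  have hh : ∀ a, φ (diagonal B.h) a a = ∑ x, U a x ^ 2 * B.h x := by
    intro a
    rw [hφ, conjHom_apply, Matrix.mul_apply]
    refine Finset.sum_congr rfl fun x _ => ?_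
    rw [mul_diagonal, transpose_apply]; ring
  have h1 : ∀ a, c * φ (diagonal B.h) a a ≤ lam a ^ 2 + b := by
    intro a
    have := (conjHom_psd U hU B.ha).diag_nonneg (i := a)
    rw [← hφ, map_sub, map_add, map_smul, map_smul, map_mul, hφT, map_one,
      diagonal_mul_diagonal] at this
    simp at this
    nlinarith
  have h2 : ∀ a, |lam a| ≤ 1 → φ (diagonal B.h) a a ≤ (1 + b) / c := by
    intro a ha
    rw [le_div_iff₀ hc]
    have := h1 a
    have : lam a ^ 2 ≤ 1 := by rwa [sq_le_one_iff_abs_le_one]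
    linarith
  have rs : ∀ a, ∑ x, U a x ^ 2 = 1 := by
    intro a
    have := congrFun (congrFun hU' a) a
    rw [Matrix.mul_apply, Matrix.one_apply_eq] at this
    rw [← this]
    exact Finset.sum_congr rfl fun x _ => by rw [transpose_apply]; ring
  have cs : ∀ x, ∑ a, U a x ^ 2 = 1 := by
    intro a
    have := congrFun (congrFun hU a) a
    rw [Matrix.mul_apply, Matrix.one_apply_eq] at this
    rw [← this]
    exact Finset.sum_congr rfl fun x _ => by rw [transpose_apply]; ring
  have comm : ∀ A, A * B.T = B.T * A → ∀ a b, φ A a b * (lam a - lam b) = 0 := by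
    intro A hA a b
    have := congrArg φ hA
    rw [map_mul, map_mul, hφT] at this
    have := congrFun (congrFun this a) b
    rw [mul_diagonal, diagonal_mul] at this
    linarith
  have acomm : ∀ A, A * B.T = -(B.T * A) → ∀ a b, φ A a b * (lam a + lam b) = 0 := by
    intro A hA a b
    have := congrArg φ hA
    rw [map_mul, map_neg, map_mul, hφT] at this
    have := congrFun (congrFun this a) b
    rw [Matrix.neg_apply, mul_diagonal, diagonal_mul] at this
    linarith
  have m2 : ∀ A B C D, A * B = C * D → φ A * φ B = φ C * φ D := by
    intro A B C D h
    rw [← map_mul, h, map_mul]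
  have m2n : ∀ A B C D, A * B = -(C * D) → φ A * φ B = -(φ C * φ D) := by
    intro A B C D h
    rw [← map_mul, h, map_neg, map_mul]
  have mn : ∀ A B, A * B = -1 → φ A * φ B = -1 := by
    intro A B h
    rw [← map_mul, h, map_neg, map_one]
  have mo : ∀ A B, A * B = 1 → φ A * φ B = 1 := by
    intro A B h
    rw [← map_mul, h, map_one]
  have ms : ∀ A, Aᵀ = A → (φ A)ᵀ = φ A := by
    intro A h
    rw [hφ, conjHom_t, h]
  have mk : ∀ A, Aᵀ = -A → (φ A)ᵀ = -φ A := by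
    intro A h
    rw [hφ, conjHom_t, h, map_neg]
  have Rt := fun i => mk _ (B.Rt i)
  refine ⟨⟨lam, φ B.G, φ B.P, φ B.I, φ B.J, fun i => φ (B.R i), mo _ _ B.GG, ms _ B.Gt,
    acomm _ B.GT, mo _ _ B.PP, ms _ B.Pt, acomm _ B.PT, m2 _ _ _ _ B.PG,
    by rw [hφ, conjHom_tr]; exact B.trP, mn _ _ B.II, mn _ _ B.JJ, m2n _ _ _ _ B.IJ, mk _ B.It,
    mk _ B.Jt, comm _ B.IT, comm _ B.JT, m2 _ _ _ _ B.IG, m2 _ _ _ _ B.JG, m2 _ _ _ _ B.IP,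
    m2 _ _ _ _ B.JP, fun i => m2 _ _ _ _ (B.IR i), fun i => m2 _ _ _ _ (B.JR i), Rt,
    fun i => m2 _ _ _ _ (B.PR i), fun i => m2n _ _ _ _ (B.GR i),
    fun i j h => m2n _ _ _ _ (B.RR i j h), ?_, ?_, ?_, ?_⟩⟩
  · intro i a
    have := (conjHom_psd U hU (B.hb i)).diag_nonneg (i := a)
    rw [← hφ, map_add, map_smul, map_mul, map_one] at this
    have e : φ (B.R i) * φ (B.R i) = - ((φ (B.R i))ᵀ * φ (B.R i)) := by
      rw [Rt, neg_mul, neg_neg]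
    rw [e] at this
    simp [Matrix.mul_apply] at this
    refine le_trans (le_of_eq ?_) this
    exact Finset.sum_congr rfl fun x _ => by ring
  · intro i a ha
    have := (conjHom_psd U hU (B.hz i)).diag_nonneg (i := a)
    rw [← hφ, map_sub, map_mul, hφ, ← conjHom_t, ← hφ] at this
    simp only [map_smul, map_sub, map_mul, hφT] at this
    rw [Matrix.sub_apply, Matrix.smul_apply, Matrix.mul_apply, sub_nonneg] at this
    refine le_trans (le_trans (le_of_eq ?_) this) (le_trans ?_ (le_max_left _ _))
    · rw [Finset.mul_sum]
      refine Finset.sum_congr rfl fun x _ => ?_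
      rw [transpose_apply, Matrix.smul_apply, Matrix.sub_apply, mul_diagonal, diagonal_mul,
        smul_eq_mul]
      ring
    · rw [smul_eq_mul]
      exact mul_le_mul_of_nonneg_left (h2 a ha) hz0
  · intro i a b' ha hb'
    have p1 := conjHom_psd U hU (B.hd1 i)
    have p2 := conjHom_psd U hU (B.hd2 i)
    rw [← hφ] at p1 p2
    rw [map_sub] at p2
    set M := φ ((s:ℝ) • (B.R i * B.R i + 1) + 1) with hM
    have d : ∀ a, |lam a| ≤ 1 → M a a ≤ (1 + b) / c := by
      intro a ha
      have := p2.diag_nonneg (i := a)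
      rw [Matrix.sub_apply, sub_nonneg] at this
      exact this.trans (h2 a ha)
    have e := psd_entry p1 a b'
    have e' : |M a b'| ≤ (1 + b) / c := by linarith [d a ha, d b' hb']
    have e2 : (s:ℝ) * (φ (B.R i) * φ (B.R i) + 1) a b' = M a b' - (1 : Matrix γ γ ℝ) a b' := by
      rw [hM, map_add, map_smul, map_add, map_mul, map_one]
      simp [mul_add]
    have : (s:ℝ) * |(φ (B.R i) * φ (B.R i) + 1) a b'| = |M a b' - (1 : Matrix γ γ ℝ) a b'| := by
      rw [← e2, abs_mul, Nat.abs_cast]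
    rw [this]
    refine le_trans (le_trans (abs_sub _ _) ?_) (le_max_right _ _)
    refine add_le_add e' ?_
    rw [Matrix.one_apply]; split_ifs <;> simp
  · set S := Finset.univ.filter (fun a => |lam a| ≤ 1)
    set Q := Finset.univ.filter (fun a => B.h a < K)
    have hQ : Q.card ≤ (2 * K) ^ n * (8 * N) := by convert B.hcard K using 2
    have hKpos : (0:ℝ) < K := by
      by_contra hk
      have : (K:ℝ) = 0 := le_antisymm (not_lt.1 hk) (by positivity)
      rw [this] at hK; linarith
    have q : ∀ a ∈ S, (1:ℝ) / 2 ≤ ∑ x ∈ Q, U a x ^ 2 := by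
      intro a ha
      have ha' : |lam a| ≤ 1 := (Finset.mem_filter.1 ha).2
      have i1 := h2 a ha'
      rw [hh] at i1
      have i2 : (K:ℝ) * (1 - ∑ x ∈ Q, U a x ^ 2) ≤ ∑ x, U a x ^ 2 * B.h x := by
        rw [← rs a, Finset.sum_filter, ← Finset.sum_sub_distrib, Finset.mul_sum]
        refine Finset.sum_le_sum fun x _ => ?_
        split_ifs with hx
        · rw [sub_self, mul_zero]; exact mul_nonneg (sq_nonneg _) (B.h0 x)
        · rw [sub_zero, mul_comm]; exact mul_le_mul_of_nonneg_left (not_lt.1 hx) (sq_nonneg _)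
      have i3 : (1 + b) / c ≤ K / 2 := by
        rw [div_le_div_iff₀ hc (by norm_num)]; linarith
      have : (K:ℝ) * (1 - ∑ x ∈ Q, U a x ^ 2) ≤ K * (1 / 2) := by linarith
      have := le_of_mul_le_mul_left this hKpos
      linarith
    have t1 : (S.card : ℝ) * (1 / 2) ≤ ∑ a ∈ S, ∑ x ∈ Q, U a x ^ 2 := by
      rw [← nsmul_eq_mul]
      exact Finset.card_nsmul_le_sum _ _ _ q
    have t2 : ∑ a ∈ S, ∑ x ∈ Q, U a x ^ 2 ≤ ∑ a, ∑ x ∈ Q, U a x ^ 2 :=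
      Finset.sum_le_sum_of_subset_of_nonneg (Finset.subset_univ _)
        fun a _ _ => Finset.sum_nonneg fun x _ => sq_nonneg _
    have t3 : ∑ a, ∑ x ∈ Q, U a x ^ 2 = Q.card := by
      rw [Finset.sum_comm]
      simp [cs]
    have : (S.card : ℝ) ≤ 2 * Q.card := by linarith
    have : S.card ≤ 2 * Q.card := by exact_mod_cast this
    omega
end

end HRN


namespace HRN
open Matrix

def Ex (n N d : ℕ) (x : Fin 4 ⊕ Fin n → Matrix (Fin d) (Fin d) ℝ) : Prop :=
  x (Sum.inl 0) * x (Sum.inl 0) = 1 ∧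
  x (Sum.inl 1) * x (Sum.inl 1) = 1 ∧
  x (Sum.inl 2) * x (Sum.inl 2) = -1 ∧
  x (Sum.inl 3) * x (Sum.inl 3) = -1 ∧
  x (Sum.inl 0) * x (Sum.inl 1) = x (Sum.inl 1) * x (Sum.inl 0) ∧
  x (Sum.inl 0) * x (Sum.inl 2) = x (Sum.inl 2) * x (Sum.inl 0) ∧
  x (Sum.inl 0) * x (Sum.inl 3) = x (Sum.inl 3) * x (Sum.inl 0) ∧
  x (Sum.inl 2) * x (Sum.inl 1) = x (Sum.inl 1) * x (Sum.inl 2) ∧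
  x (Sum.inl 3) * x (Sum.inl 1) = x (Sum.inl 1) * x (Sum.inl 3) ∧
  x (Sum.inl 2) * x (Sum.inl 3) = -(x (Sum.inl 3) * x (Sum.inl 2)) ∧
  (∀ i, x (Sum.inl 0) * x (Sum.inr i) = x (Sum.inr i) * x (Sum.inl 0)) ∧
  (∀ i, x (Sum.inl 1) * x (Sum.inr i) = -(x (Sum.inr i) * x (Sum.inl 1))) ∧
  (∀ i, x (Sum.inl 2) * x (Sum.inr i) = x (Sum.inr i) * x (Sum.inl 2)) ∧
  (∀ i, x (Sum.inl 3) * x (Sum.inr i) = x (Sum.inr i) * x (Sum.inl 3)) ∧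
  (x (Sum.inl 0)).trace = 8 * N ∧
  ∀ k a b, x k a b ∈ Set.Icc (-2 : ℝ) 2

def dfc {n d : ℕ} (x : Fin 4 ⊕ Fin n → Matrix (Fin d) (Fin d) ℝ) (i j : Fin n) :
    Matrix (Fin d) (Fin d) ℝ :=
  x (Sum.inr i) * x (Sum.inr j) + x (Sum.inr j) * x (Sum.inr i) + (if i = j then (2 : ℝ) else 0) • 1

section
variable {γ : Type} [Fintype γ] [DecidableEq γ]

lemma exists_gap (lam : γ → ℝ) (L : ℕ)
    (hL : (Finset.univ.filter (fun a => |lam a| ≤ 1)).card ≤ L) :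
    ∃ δ : ℝ, 0 ≤ δ ∧ δ + 1 / (L + 1) ≤ 1 ∧ ∀ a, δ < |lam a| → δ + 1 / (L + 1) ≤ |lam a| := by
  have hp : (0:ℝ) < L + 1 := by positivity
  set S := Finset.univ.filter (fun a => |lam a| ≤ 1)
  have : ∃ k ∈ Finset.range (L + 1), k ∉ S.image (fun a => ⌈|lam a| * (L + 1)⌉₊ - 1) := by
    by_contra h
    push Not at h
    have := Finset.card_le_card (show Finset.range (L+1) ⊆ _ from h)
    rw [Finset.card_range] at this
    have := this.trans Finset.card_image_le
    omega
  obtain ⟨k, hk, hkS⟩ := this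
  have hk' : (k:ℝ) + 1 ≤ L + 1 := by
    have := Finset.mem_range.1 hk
    exact_mod_cast this
  refine ⟨k / (L + 1), by positivity, ?_, ?_⟩
  · rw [← add_div, div_le_one hp]; exact hk'
  · intro a ha
    by_contra hlt
    push Not at hlt
    apply hkS
    rw [Finset.mem_image]
    rw [← add_div, lt_div_iff₀ hp] at hlt
    rw [div_lt_iff₀ hp] at ha
    refine ⟨a, ?_, ?_⟩
    · rw [Finset.mem_filter]
      refine ⟨Finset.mem_univ _, ?_⟩
      by_contra h1
      nlinarith
    · have : ⌈|lam a| * (L + 1)⌉₊ = k + 1 := by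
        rw [Nat.ceil_eq_iff (by omega)]
        refine ⟨?_, ?_⟩
        · simpa using ha
        · push_cast; exact hlt.le
      rw [this]; rfl

lemma entry_of_orth (A : Matrix γ γ ℝ) (h : Aᵀ * A = 1) (a b : γ) : A a b ∈ Set.Icc (-2:ℝ) 2 := by
  have := congrFun (congrFun h b) b
  rw [Matrix.mul_apply, Matrix.one_apply_eq] at this
  have h2 : A a b * A a b ≤ 1 := by
    rw [← this]
    exact Finset.single_le_sum (f := fun j => Aᵀ b j * A j b)
      (fun i _ => mul_self_nonneg (A i b)) (Finset.mem_univ a)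
  constructor <;> nlinarith

theorem Dg.trunc {s n N L : ℕ} {C : ℝ} (D : Dg s n N C L γ) (hs : 1 ≤ s) (hC : 0 ≤ C) :
    ∃ d ≤ L, ∃ x, Ex n N d x ∧
      ∀ i j a b, |dfc x i j a b| ≤ (2 * (L + 1) ^ 2 * C + 2 * C) / s := by
  obtain ⟨δ, hδ0, hδ1, hgap⟩ := exists_gap D.lam L D.hL
  have hp : (0:ℝ) < L + 1 := by positivity
  have hp' : (0:ℝ) < 1 / (L + 1) := by positivity
  set E := Finset.univ.filter (fun a => |D.lam a| ≤ δ) with hE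
  have mE : ∀ a, a ∈ E ↔ |D.lam a| ≤ δ := by intro a; simp [hE]
  have cE : E.card ≤ L := by
    refine le_trans (Finset.card_le_card ?_) D.hL
    intro a ha
    rw [mE] at ha
    rw [Finset.mem_filter]
    exact ⟨Finset.mem_univ _, by linarith⟩
  set f : Fin E.card → γ := fun i => (E.equivFin.symm i : γ) with hf
  have fE : ∀ i, f i ∈ E := fun i => (E.equivFin.symm i).2
  have finj : ∀ i j, f i = f j ↔ i = j := by
    intro i j
    constructor
    · intro h; exact E.equivFin.symm.injective (Subtype.ext h)
    · intro h; rw [h]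
  have fsum : ∀ F : γ → ℝ, ∑ c ∈ E, F c = ∑ i, F (f i) := by
    intro F
    rw [← Finset.sum_coe_sort E, ← Equiv.sum_comp E.equivFin.symm]
  have fsplit : ∀ F : γ → ℝ, ∑ c, F c = ∑ i, F (f i) + ∑ c ∈ Eᶜ, F c := by
    intro F
    rw [← fsum, Finset.sum_add_sum_compl]
  have out : ∀ c, c ∈ Eᶜ → δ + 1 / (L + 1) ≤ |D.lam c| := by
    intro c hc
    rw [Finset.mem_compl, mE, not_le] at hc
    exact hgap c hc
  have gap : ∀ i c, c ∈ Eᶜ → 1 / ((L:ℝ) + 1) ≤ |D.lam (f i) - D.lam c| := by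
    intro i c hc
    have h1 := out c hc
    have h2 := (mE _).1 (fE i)
    have := abs_sub_abs_le_abs_sub (D.lam c) (D.lam (f i))
    rw [abs_sub_comm] at this
    linarith
  have gap' : ∀ i c, c ∈ Eᶜ → 0 < |D.lam (f i) + D.lam c| := by
    intro i c hc
    have h1 := out c hc
    have h2 := (mE _).1 (fE i)
    have := abs_sub_abs_le_abs_sub (D.lam c) (-D.lam (f i))
    rw [abs_neg, sub_neg_eq_add, add_comm (D.lam c)] at this
    linarith
  set sb : Matrix γ γ ℝ → Matrix (Fin E.card) (Fin E.card) ℝ := fun M => M.submatrix f f with hsb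
  have sbm : ∀ A B : Matrix γ γ ℝ, (∀ i c, c ∈ Eᶜ → A (f i) c = 0) → sb (A * B) = sb A * sb B := by
    intro A B h
    ext i j
    simp only [hsb, submatrix_apply, Matrix.mul_apply]
    rw [fsplit, Finset.sum_eq_zero (s := Eᶜ), add_zero]
    intro c hc
    rw [h i c hc, zero_mul]
  have sbm' : ∀ A B : Matrix γ γ ℝ, (∀ i c, c ∈ Eᶜ → B c (f i) = 0) → sb (A * B) = sb A * sb B := by
    intro A B h
    ext i j
    simp only [hsb, submatrix_apply, Matrix.mul_apply]
    rw [fsplit, Finset.sum_eq_zero (s := Eᶜ), add_zero]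
    intro c hc
    rw [h j c hc, mul_zero]
  have sb1 : sb 1 = 1 := by
    ext i j
    simp only [hsb, submatrix_apply, Matrix.one_apply, finj]
  have sbn : ∀ A, sb (-A) = -sb A := fun A => rfl
  have ac : ∀ A : Matrix γ γ ℝ, (∀ a b, A a b * (D.lam a + D.lam b) = 0) →
      ∀ i c, c ∈ Eᶜ → A (f i) c = 0 := by
    intro A h i c hc
    have := h (f i) c
    exact (mul_eq_zero.1 this).resolve_right (abs_pos.1 (gap' i c hc))
  have cm : ∀ A : Matrix γ γ ℝ, (∀ a b, A a b * (D.lam a - D.lam b) = 0) →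
      ∀ i c, c ∈ Eᶜ → A (f i) c = 0 := by
    intro A h i c hc
    have := h (f i) c
    exact (mul_eq_zero.1 this).resolve_right (abs_pos.1 (hp'.trans_le (gap i c hc)))
  have tS : ∀ A : Matrix γ γ ℝ, Aᵀ = A → (∀ i c, c ∈ Eᶜ → A (f i) c = 0) →
      ∀ i c, c ∈ Eᶜ → A c (f i) = 0 := by
    intro A h h2 i c hc
    rw [← h, transpose_apply]; exact h2 i c hc
  have tK : ∀ A : Matrix γ γ ℝ, Aᵀ = -A → (∀ i c, c ∈ Eᶜ → A (f i) c = 0) →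
      ∀ i c, c ∈ Eᶜ → A c (f i) = 0 := by
    intro A h h2 i c hc
    have : A = -Aᵀ := by rw [h, neg_neg]
    rw [this, Matrix.neg_apply, transpose_apply, h2 i c hc, neg_zero]
  have P1 := ac _ D.PT
  have G1 := ac _ D.GT
  have I1 := cm _ D.IT
  have J1 := cm _ D.JT
  have P2 := tS _ D.Pt P1
  have G2 := tS _ D.Gt G1
  have I2 := tK _ D.It I1
  have J2 := tK _ D.Jt J1
  let x : Fin 4 ⊕ Fin n → Matrix (Fin E.card) (Fin E.card) ℝ :=
    Sum.elim ![sb D.P, sb D.G, sb D.I, sb D.J] (fun i => sb (D.R i))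
  have x0 : x (Sum.inl 0) = sb D.P := rfl
  have x1 : x (Sum.inl 1) = sb D.G := rfl
  have x2 : x (Sum.inl 2) = sb D.I := rfl
  have x3 : x (Sum.inl 3) = sb D.J := rfl
  have x4 : ∀ i, x (Sum.inr i) = sb (D.R i) := fun i => rfl
  refine ⟨E.card, cE, x, ?_, ?_⟩
  · unfold Ex
    simp only [x0, x1, x2, x3, x4]
    refine ⟨?_, ?_, ?_, ?_, ?_, ?_, ?_, ?_, ?_, ?_, ?_, ?_, ?_, ?_, ?_, ?_⟩
    · rw [← sbm _ _ P1, D.PP, sb1]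
    · rw [← sbm _ _ G1, D.GG, sb1]
    · rw [← sbm _ _ I1, D.II, sbn, sb1]
    · rw [← sbm _ _ J1, D.JJ, sbn, sb1]
    · rw [← sbm _ _ P1, D.PG, sbm _ _ G1]
    · rw [← sbm _ _ P1, ← D.IP, sbm _ _ I1]
    · rw [← sbm _ _ P1, ← D.JP, sbm _ _ J1]
    · rw [← sbm _ _ I1, D.IG, sbm _ _ G1]
    · rw [← sbm _ _ J1, D.JG, sbm _ _ G1]
    · rw [← sbm _ _ I1, D.IJ, sbn, sbm _ _ J1]
    · intro i; rw [← sbm _ _ P1, D.PR, sbm' _ _ P2]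
    · intro i; rw [← sbm _ _ G1, D.GR, sbn, sbm' _ _ G2]
    · intro i; rw [← sbm _ _ I1, D.IR, sbm' _ _ I2]
    · intro i; rw [← sbm _ _ J1, D.JR, sbm' _ _ J2]
    · rw [← D.trP]
      simp only [Matrix.trace, Matrix.diag, hsb, submatrix_apply]
      rw [fsplit (fun c => D.P c c), Finset.sum_eq_zero (s := Eᶜ), add_zero]
      intro c hc
      have h1 := D.PT c c
      have h2 := out c hc
      refine (mul_eq_zero.1 h1).resolve_right ?_
      intro h3
      have : D.lam c = 0 := by linarith
      rw [this, abs_zero] at h2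
      linarith
    · intro k a b
      rcases k with k | k
      · fin_cases k
        · exact entry_of_orth D.P (by rw [D.Pt, D.PP]) _ _
        · exact entry_of_orth D.G (by rw [D.Gt, D.GG]) _ _
        · exact entry_of_orth D.I (by rw [D.It, neg_mul, D.II, neg_neg]) _ _
        · exact entry_of_orth D.J (by rw [D.Jt, neg_mul, D.JJ, neg_neg]) _ _
      · have h1 := D.hb k (f b)
        have h2 : D.R k (f a) (f b) ^ 2 ≤ 2 :=
          (Finset.single_le_sum (f := fun c => D.R k c (f b) ^ 2)
            (fun i _ => sq_nonneg _) (Finset.mem_univ (f a))).trans h1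
        show D.R k (f a) (f b) ∈ _
        constructor <;> nlinarith
  · have hs1 : (1:ℝ) ≤ s := by exact_mod_cast hs
    have hs0 : (0:ℝ) < s := by linarith
    have low : ∀ a, |D.lam (f a)| ≤ 1 := fun a => by
      have := (mE _).1 (fE a)
      linarith
    have o1 : ∀ i a, ∑ c ∈ Eᶜ, D.R i c (f a) ^ 2 ≤ (L + 1) ^ 2 * C / s := by
      intro i a
      have h1 := D.hz i (f a) (low a)
      have h2 : (1 / ((L:ℝ) + 1)) ^ 2 * ∑ c ∈ Eᶜ, D.R i c (f a) ^ 2 ≤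
          ∑ c, ((D.lam (f a) - D.lam c) * D.R i c (f a)) ^ 2 := by
        rw [Finset.mul_sum]
        refine le_trans (Finset.sum_le_sum fun c hc => ?_)
          (Finset.sum_le_sum_of_subset_of_nonneg (Finset.subset_univ Eᶜ)
            (fun c _ _ => sq_nonneg ((D.lam (f a) - D.lam c) * D.R i c (f a))))
        rw [mul_pow]
        refine mul_le_mul_of_nonneg_right ?_ (sq_nonneg _)
        rw [← sq_abs (D.lam (f a) - D.lam c)]
        exact pow_le_pow_left₀ hp'.le (gap a c hc) 2
      set A := ∑ c ∈ Eᶜ, D.R i c (f a) ^ 2 with hA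
      have hA0 : 0 ≤ A := Finset.sum_nonneg fun c _ => sq_nonneg _
      rw [one_div, inv_pow, inv_mul_le_iff₀ (by positivity)] at h2
      rw [le_div_iff₀ hs0]
      have h3 : A * s ≤ A * s ^ 2 := by
        apply mul_le_mul_of_nonneg_left _ hA0
        nlinarith
      refine h3.trans ?_
      set Y := ∑ c, ((D.lam (f a) - D.lam c) * D.R i c (f a)) ^ 2
      calc A * s ^ 2 ≤ ((L + 1) ^ 2 * Y) * s ^ 2 := by gcongr
        _ = (L + 1) ^ 2 * (s ^ 2 * Y) := by ring
        _ ≤ _ := by gcongr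
    have o2 : ∀ i j a b, |(sb (D.R i) * sb (D.R j)) a b - (D.R i * D.R j) (f a) (f b)| ≤
        (L + 1) ^ 2 * C / s := by
      intro i j a b
      rw [Matrix.mul_apply, Matrix.mul_apply, fsplit]
      simp only [hsb, submatrix_apply]
      rw [sub_add_cancel_left, abs_neg]
      have : ∀ c, D.R i (f a) c = - D.R i c (f a) := by
        intro c
        have := congrFun (congrFun (D.Rt i) c) (f a)
        simpa using this
      calc |∑ c ∈ Eᶜ, D.R i (f a) c * D.R j c (f b)|
          ≤ ∑ c ∈ Eᶜ, |D.R i (f a) c * D.R j c (f b)| := Finset.abs_sum_le_sum_abs _ _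
        _ ≤ ∑ c ∈ Eᶜ, (D.R i c (f a) ^ 2 + D.R j c (f b) ^ 2) / 2 := by
          refine Finset.sum_le_sum fun c _ => ?_
          rw [this, abs_le]
          constructor <;> nlinarith [sq_nonneg (D.R i c (f a) - D.R j c (f b)),
            sq_nonneg (D.R i c (f a) + D.R j c (f b))]
        _ = (∑ c ∈ Eᶜ, D.R i c (f a) ^ 2 + ∑ c ∈ Eᶜ, D.R j c (f b) ^ 2) / 2 := by
          rw [← Finset.sum_add_distrib, Finset.sum_div]
        _ ≤ _ := by linarith [o1 i a, o1 j b]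
    have o3 : ∀ i j a b, |(D.R i * D.R j) (f a) (f b) + (D.R j * D.R i) (f a) (f b) +
        (if i = j then (2:ℝ) else 0) * (1 : Matrix (Fin E.card) (Fin E.card) ℝ) a b| ≤ 2 * C / s := by
      intro i j a b
      have e1 : (1 : Matrix (Fin E.card) (Fin E.card) ℝ) a b = (1 : Matrix γ γ ℝ) (f a) (f b) := by
        simp only [Matrix.one_apply, finj]
      by_cases h : i = j
      · subst h
        have h1 := D.hd i (f a) (f b) (low a) (low b)
        rw [Matrix.add_apply] at h1
        rw [if_pos rfl, e1, le_div_iff₀ hs0]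
        have : (D.R i * D.R i) (f a) (f b) + (D.R i * D.R i) (f a) (f b) +
          2 * (1 : Matrix γ γ ℝ) (f a) (f b) =
          2 * ((D.R i * D.R i) (f a) (f b) + (1 : Matrix γ γ ℝ) (f a) (f b)) := by ring
        rw [this, abs_mul, abs_two]
        linarith
      · rw [D.RR i j h, if_neg h, Matrix.neg_apply]
        simp only [neg_add_cancel, zero_mul, add_zero, abs_zero]
        positivity
    intro i j a b
    have e : dfc x i j a b = ((sb (D.R i) * sb (D.R j)) a b - (D.R i * D.R j) (f a) (f b)) +
      ((sb (D.R j) * sb (D.R i)) a b - (D.R j * D.R i) (f a) (f b)) +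
      ((D.R i * D.R j) (f a) (f b) + (D.R j * D.R i) (f a) (f b) +
        (if i = j then (2:ℝ) else 0) * (1 : Matrix (Fin E.card) (Fin E.card) ℝ) a b) := by
      simp only [dfc, x4, Matrix.add_apply, Matrix.smul_apply, smul_eq_mul]
      ring
    rw [e]
    refine (abs_add_three _ _ _).trans ?_
    have q1 := o2 i j a b
    have q2 := o2 j i a b
    have q3 := o3 i j a b
    have : (2 * ((L:ℝ) + 1) ^ 2 * C + 2 * C) / s =
      (L + 1) ^ 2 * C / s + (L + 1) ^ 2 * C / s + 2 * C / s := by ring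
    rw [this]
    linarith
end

lemma Ex_compact (n N d : ℕ) : IsCompact {x | Ex n N d x} := by
  have hc : IsCompact {x : Fin 4 ⊕ Fin n → Matrix (Fin d) (Fin d) ℝ |
      ∀ k a b, x k a b ∈ Set.Icc (-2 : ℝ) 2} := by
    have := isCompact_univ_pi (X := fun _ : Fin 4 ⊕ Fin n => Fin d → Fin d → ℝ)
      (s := fun _ => Set.univ.pi fun _ => Set.univ.pi fun _ => Set.Icc (-2:ℝ) 2)
      (fun _ => isCompact_univ_pi fun _ => isCompact_univ_pi fun _ => isCompact_Icc)
    have e : {x : Fin 4 ⊕ Fin n → Matrix (Fin d) (Fin d) ℝ | ∀ k a b, x k a b ∈ Set.Icc (-2 : ℝ) 2} =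
        (Set.univ.pi fun _ : Fin 4 ⊕ Fin n => Set.univ.pi fun _ : Fin d => Set.univ.pi
          fun _ : Fin d => Set.Icc (-2:ℝ) 2) := by
      ext x
      exact ⟨fun h k _ a _ b _ => h k a b, fun h k a b => h k trivial a trivial b trivial⟩
    rw [e]
    exact this
  refine hc.of_isClosed_subset ?_ (fun x hx => hx.2.2.2.2.2.2.2.2.2.2.2.2.2.2.2)
  have hx : ∀ k, Continuous fun x : Fin 4 ⊕ Fin n → Matrix (Fin d) (Fin d) ℝ => x k :=
    fun k => continuous_apply k
  have hm : ∀ k l, Continuous fun x : Fin 4 ⊕ Fin n → Matrix (Fin d) (Fin d) ℝ => x k * x l :=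
    fun k l => (hx k).mul (hx l)
  unfold Ex
  refine (isClosed_eq (hm _ _) continuous_const).and <|
    (isClosed_eq (hm _ _) continuous_const).and <|
    (isClosed_eq (hm _ _) continuous_const).and <|
    (isClosed_eq (hm _ _) continuous_const).and <|
    (isClosed_eq (hm _ _) (hm _ _)).and <|
    (isClosed_eq (hm _ _) (hm _ _)).and <|
    (isClosed_eq (hm _ _) (hm _ _)).and <|
    (isClosed_eq (hm _ _) (hm _ _)).and <|
    (isClosed_eq (hm _ _) (hm _ _)).and <|
    (isClosed_eq (hm _ _) (hm _ _).neg).and <|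
    IsClosed.and ?_ <| IsClosed.and ?_ <| IsClosed.and ?_ <| IsClosed.and ?_ <|
    (isClosed_eq ((hx _).matrix_trace) continuous_const).and hc.isClosed
  · simp only [Set.setOf_forall]; exact isClosed_iInter fun i => isClosed_eq (hm _ _) (hm _ _)
  · simp only [Set.setOf_forall]; exact isClosed_iInter fun i => isClosed_eq (hm _ _) (hm _ _).neg
  · simp only [Set.setOf_forall]; exact isClosed_iInter fun i => isClosed_eq (hm _ _) (hm _ _)
  · simp only [Set.setOf_forall]; exact isClosed_iInter fun i => isClosed_eq (hm _ _) (hm _ _)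

def tdf {n d : ℕ} (x : Fin 4 ⊕ Fin n → Matrix (Fin d) (Fin d) ℝ) : ℝ :=
  ∑ i, ∑ j, ∑ a, ∑ b, |dfc x i j a b|

lemma tdf_cont (n d : ℕ) : Continuous (tdf : (Fin 4 ⊕ Fin n → Matrix (Fin d) (Fin d) ℝ) → ℝ) := by
  unfold tdf dfc
  refine continuous_finsetSum _ fun i _ => continuous_finsetSum _ fun j _ =>
    continuous_finsetSum _ fun a _ => continuous_finsetSum _ fun b _ => ?_
  have hx : ∀ k, Continuous fun x : Fin 4 ⊕ Fin n → Matrix (Fin d) (Fin d) ℝ => x k :=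
    fun k => continuous_apply k
  have : Continuous fun x : Fin 4 ⊕ Fin n → Matrix (Fin d) (Fin d) ℝ =>
      x (Sum.inr i) * x (Sum.inr j) + x (Sum.inr j) * x (Sum.inr i) +
      (if i = j then (2 : ℝ) else 0) • (1 : Matrix (Fin d) (Fin d) ℝ) :=
    (((hx _).mul (hx _)).add ((hx _).mul (hx _))).add continuous_const
  exact (this.matrix_elem a b).abs

theorem exact_of_approx {n N L : ℕ} {A : ℝ} (hA : 0 ≤ A)
    (h : ∀ s : ℕ, 1 ≤ s → ∃ d ≤ L, ∃ x, Ex n N d x ∧ ∀ i j a b, |dfc x i j a b| ≤ A / s) :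
    ∃ d x, Ex n N d x ∧ ∀ i j, dfc x i j = 0 := by
  by_contra hne
  push Not at hne
  have hpos : ∀ d x, Ex n N d x → 0 < tdf x := by
    intro d x hx
    obtain ⟨i, j, hij⟩ := hne d x hx
    have : ∃ a b, dfc x i j a b ≠ 0 := by
      by_contra h0
      push Not at h0
      exact hij (by ext a b; simpa using h0 a b)
    obtain ⟨a, b, hab⟩ := this
    have p := abs_pos.2 hab
    unfold tdf
    refine p.trans_le ?_
    calc |dfc x i j a b| ≤ ∑ b, |dfc x i j a b| :=
          Finset.single_le_sum (f := fun b => |dfc x i j a b|) (fun _ _ => abs_nonneg _) (Finset.mem_univ b)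
      _ ≤ ∑ a, ∑ b, |dfc x i j a b| :=
          Finset.single_le_sum (f := fun a => ∑ b, |dfc x i j a b|)
            (fun _ _ => Finset.sum_nonneg fun _ _ => abs_nonneg _) (Finset.mem_univ a)
      _ ≤ ∑ j, ∑ a, ∑ b, |dfc x i j a b| :=
          Finset.single_le_sum (f := fun j => ∑ a, ∑ b, |dfc x i j a b|)
            (fun _ _ => Finset.sum_nonneg fun _ _ => Finset.sum_nonneg fun _ _ => abs_nonneg _)
            (Finset.mem_univ j)
      _ ≤ _ :=
          Finset.single_le_sum (f := fun i => ∑ j, ∑ a, ∑ b, |dfc x i j a b|)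
            (fun _ _ => Finset.sum_nonneg fun _ _ => Finset.sum_nonneg fun _ _ =>
              Finset.sum_nonneg fun _ _ => abs_nonneg _)
            (Finset.mem_univ i)
  have hmin : ∀ d, ∃ m : ℝ, 0 < m ∧ ∀ x, Ex n N d x → m ≤ tdf x := by
    intro d
    by_cases hd : {x | Ex n N d x}.Nonempty
    · obtain ⟨x0, hx0, hm⟩ := (Ex_compact n N d).exists_isMinOn hd (tdf_cont n d).continuousOn
      exact ⟨tdf x0, hpos d x0 hx0, fun x hx => hm hx⟩
    · exact ⟨1, one_pos, fun x hx => absurd ⟨x, hx⟩ hd⟩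
  choose m hm0 hm using hmin
  obtain ⟨d0, _, hd0⟩ := Finset.exists_min_image (Finset.range (L + 1)) m ⟨0, by simp⟩
  have hu : ∀ (s : ℕ), 1 ≤ s → m d0 * s ≤ n * n * L * L * A := by
    intro s hs
    obtain ⟨d, hdL, x, hx, hb⟩ := h s hs
    have h1 := (hd0 d (by rw [Finset.mem_range]; omega)).trans (hm d x hx)
    have h2 : tdf x ≤ n * (n * (d * (d * (A / s)))) := by
      have q : ∀ (k : ℕ) (F : Fin k → ℝ) (B : ℝ), (∀ i, F i ≤ B) → ∑ i, F i ≤ k * B := by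
        intro k F B hF
        have := Finset.sum_le_card_nsmul Finset.univ F B (fun i _ => hF i)
        simpa using this
      unfold tdf
      exact q _ _ _ fun i => q _ _ _ fun j => q _ _ _ fun a => q _ _ _ fun b => hb i j a b
    have hs0 : (0:ℝ) < s := by exact_mod_cast hs
    have h3 : m d0 ≤ n * (n * (L * (L * (A / s)))) := by
      have : (d:ℝ) ≤ L := by exact_mod_cast hdL
      refine h1.trans (h2.trans ?_)
      gcongr
    calc m d0 * s ≤ (n * (n * (L * (L * (A / s))))) * s := by gcongr
      _ = _ := by field_simp
  obtain ⟨s, hs⟩ := exists_nat_gt (n * n * L * L * A / m d0)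
  rw [div_lt_iff₀ (hm0 d0)] at hs
  have := hu (s + 1) (by omega)
  push_cast at this
  nlinarith [hm0 d0]

theorem Tgt.div {n N : ℕ} {τ c : ℝ} {W : Type} [Fintype W] [DecidableEq W] (t : Tgt n N τ c W)
    (a b : ℕ) (hb : b < 4) (hn : n = tab b + 8 * a + 3) : 2 ^ (4 * a + b + 1) ∣ N := by
  have τ0 := t.τ0
  have c0 := t.c0
  set b0 : ℝ := n * ((2 + τ) / 2)
  have hb0 : 0 ≤ b0 := by positivity
  obtain ⟨K, hK⟩ := exists_nat_ge (2 * (1 + b0) / c)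
  rw [div_le_iff₀ c0, mul_comm (K:ℝ)] at hK
  set C := max ((2 * (1 + τ)) * ((1 + b0) / c)) ((1 + b0) / c + 1) with hC
  have hC0 : 0 ≤ C := le_max_of_le_left (by positivity)
  set L := (2 * ((2 * K) ^ n * (8 * N)))
  obtain ⟨d, x, hx, h0⟩ := exact_of_approx (n := n) (N := N) (L := L)
    (A := 2 * (L + 1) ^ 2 * C + 2 * C) (by positivity) (by
      intro s hs
      obtain ⟨γ, i1, i2, ⟨B⟩⟩ := exists_big t s hs
      obtain ⟨D⟩ := B.dg hs hb0 c0 (by positivity) hK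
      exact D.trunc hs hC0)
  obtain ⟨e1, e2, e3, e4, e5, e6, e7, e8, e9, e10, e11, e12, e13, e14, e15, -⟩ := hx
  refine rep_div a b N d n hb hn (x (Sum.inl 0)) (x (Sum.inl 1)) (x (Sum.inl 2)) (x (Sum.inl 3))
    (fun i => x (Sum.inr i)) ⟨e2, e12, ⟨?_, ?_⟩, e3, e4, e10, e13, e14, e8, e9⟩ e1 e5 e6 e7 e11 e15
  · intro i
    have := h0 i i
    rw [dfc, if_pos rfl, ← two_smul ℝ, ← smul_add] at this
    have := (smul_eq_zero.1 this).resolve_left (by norm_num)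
    push_cast
    exact eq_neg_of_add_eq_zero_left this
  · intro i j h
    have := h0 i j
    rw [dfc, if_neg h, zero_smul, add_zero] at this
    exact eq_neg_of_add_eq_zero_left this

end HRN


namespace HRN
open Matrix

section coerc
variable {W : Type} [Fintype W] [DecidableEq W]

lemma exists_tau (A : Matrix W W ℝ) (hA : Aᵀ = A) : ∃ τ : ℝ, 0 ≤ τ ∧ (τ • 1 - A * A).PosSemidef := by
  obtain ⟨U, ξ, hU, hX⟩ := exists_diag A hA
  have hU' : U * Uᵀ = 1 := mul_eq_one_comm.1 hU
  refine ⟨∑ a, ξ a ^ 2, Finset.sum_nonneg fun a _ => sq_nonneg _, ?_⟩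
  have e : (∑ a, ξ a ^ 2) • 1 - A * A =
      Uᵀ * diagonal (fun a => (∑ a, ξ a ^ 2) - ξ a ^ 2) * U := by
    have e1 : A * A = Uᵀ * (diagonal ξ * diagonal ξ) * U := by
      rw [hX]
      calc _ = Uᵀ * diagonal ξ * (U * Uᵀ) * (diagonal ξ * U) := by noncomm_ring
        _ = _ := by rw [hU']; noncomm_ring
    have e2 : diagonal (fun a => (∑ a, ξ a ^ 2) - ξ a ^ 2) =
        (∑ a, ξ a ^ 2) • (1 : Matrix W W ℝ) - diagonal ξ * diagonal ξ := by
      rw [diagonal_mul_diagonal, ← diagonal_one, ← diagonal_smul, diagonal_sub]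
      congr 1
      ext a
      simp [sq]
    rw [e1, e2, mul_sub, sub_mul]
    simp [hU]
  rw [e]
  apply psd_conj
  apply PosSemidef.diagonal
  intro a
  simp only [Pi.zero_apply, sub_nonneg]
  exact Finset.single_le_sum (f := fun a => ξ a ^ 2) (fun _ _ => sq_nonneg _) (Finset.mem_univ a)

lemma exists_c {n : ℕ} (t : Fin n → Matrix W W ℝ) (ht : ∀ i, (t i)ᵀ = t i)
    (hu : ∀ x : Fin n → ℝ, x ≠ 0 → ∃ q, q * (∑ i, x i • t i) = 1) :
    ∃ c : ℝ, 0 < c ∧ c ≤ 1 ∧ ∀ x : Fin n → ℝ,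
      ((∑ i, x i • t i) * (∑ i, x i • t i) - (c * ∑ i, x i * x i) • 1).PosSemidef := by
  set A : (Fin n → ℝ) → Matrix W W ℝ := fun x => ∑ i, x i • t i with hA
  have At : ∀ x, (A x)ᵀ = A x := by
    intro x
    rw [hA, transpose_sum]
    exact Finset.sum_congr rfl fun i _ => by rw [transpose_smul, ht]
  set f : (Fin n → ℝ) × (W → ℝ) → ℝ := fun p => (A p.1 *ᵥ p.2) ⬝ᵥ (A p.1 *ᵥ p.2) with hf
  have dpos : ∀ {κ : Type} [Fintype κ] (v : κ → ℝ), 0 ≤ v ⬝ᵥ v := by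
    intro κ _ v
    exact Finset.sum_nonneg fun i _ => mul_self_nonneg _
  have fpos : ∀ p, 0 ≤ f p := fun p => dpos _
  have Acont : Continuous A := by
    rw [hA]
    exact continuous_finsetSum _ fun i _ => (continuous_apply i).smul continuous_const
  have fcont : Continuous f := by
    have : Continuous fun p : (Fin n → ℝ) × (W → ℝ) => A p.1 *ᵥ p.2 :=
      (Acont.comp continuous_fst).matrix_mulVec continuous_snd
    exact this.dotProduct this
  have hcomp : ∀ (κ : Type) [Fintype κ], IsCompact {v : κ → ℝ | v ⬝ᵥ v = 1} := by
    intro κ _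
    have := isCompact_univ_pi (X := fun _ : κ => ℝ) (s := fun _ => Set.Icc (-1:ℝ) 1)
      (fun _ => isCompact_Icc)
    refine this.of_isClosed_subset
      (isClosed_eq (continuous_id.dotProduct continuous_id) continuous_const) ?_
    intro v hv i _
    have h1 : v i * v i ≤ 1 := by
      have hv' : v ⬝ᵥ v = 1 := hv
      rw [← hv']
      exact Finset.single_le_sum (f := fun i => v i * v i) (fun _ _ => mul_self_nonneg _)
        (Finset.mem_univ i)
    constructor <;> nlinarith
  have hS := (hcomp (Fin n)).prod (hcomp W)
  set S := {v : Fin n → ℝ | v ⬝ᵥ v = 1} ×ˢ {v : W → ℝ | v ⬝ᵥ v = 1} with hSd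
  have hc : ∃ c : ℝ, 0 < c ∧ c ≤ 1 ∧ ∀ p ∈ S, c ≤ f p := by
    by_cases hne : S.Nonempty
    · obtain ⟨p, hp, hm⟩ := hS.exists_isMinOn hne fcont.continuousOn
      have : 0 < f p := by
        refine lt_of_le_of_ne (fpos p) fun h0 => ?_
        have h1 : A p.1 *ᵥ p.2 = 0 := dotProduct_self_eq_zero.1 h0.symm
        obtain ⟨q, hq⟩ := hu p.1 (by
          intro h
          have := hp.1
          rw [Set.mem_setOf_eq, h] at this
          simp at this)
        have h2 : p.2 = 0 := by
          have := congrArg (fun v => q *ᵥ v) h1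
          simp only [mulVec_mulVec, mulVec_zero] at this
          rwa [hq, one_mulVec] at this
        have := hp.2
        rw [Set.mem_setOf_eq, h2] at this
        simp at this
      exact ⟨min (f p) 1, lt_min this one_pos, min_le_right _ _,
        fun x hx => (min_le_left _ _).trans (hm hx)⟩
    · exact ⟨1, one_pos, le_rfl, fun p hp => absurd ⟨p, hp⟩ hne⟩
  obtain ⟨c, c0, c1, hc⟩ := hc
  have hom : ∀ (a b : ℝ) x v, f (a • x, b • v) = a ^ 2 * b ^ 2 * f (x, v) := by
    intro a b x v
    have : A (a • x) = a • A x := by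
      simp only [hA, Finset.smul_sum, smul_smul, Pi.smul_apply, smul_eq_mul]
    simp only [hf, this, smul_mulVec, mulVec_smul, smul_dotProduct, dotProduct_smul, smul_eq_mul]
    ring
  have norm1 : ∀ {κ : Type} [Fintype κ] (v : κ → ℝ), 0 < v ⬝ᵥ v →
      ((√(v ⬝ᵥ v))⁻¹ • v) ⬝ᵥ ((√(v ⬝ᵥ v))⁻¹ • v) = 1 := by
    intro κ _ v hv
    rw [smul_dotProduct, dotProduct_smul, smul_eq_mul, smul_eq_mul, ← mul_assoc, ← mul_inv,
      Real.mul_self_sqrt hv.le, inv_mul_cancel₀ hv.ne']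
  have main : ∀ x v, c * (x ⬝ᵥ x) * (v ⬝ᵥ v) ≤ f (x, v) := by
    intro x v
    rcases (dpos x).eq_or_lt with hx | hx
    · rw [← hx]; simp [fpos]
    rcases (dpos v).eq_or_lt with hv | hv
    · rw [← hv]; simp [fpos]
    have := hc ((√(x ⬝ᵥ x))⁻¹ • x, (√(v ⬝ᵥ v))⁻¹ • v) ⟨norm1 x hx, norm1 v hv⟩
    rw [hom, inv_pow, inv_pow, Real.sq_sqrt hx.le, Real.sq_sqrt hv.le, ← mul_inv,
      ← div_eq_inv_mul, le_div_iff₀ (by positivity)] at this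
    linarith
  refine ⟨c, c0, c1, fun x => ?_⟩
  show (A x * A x - (c * ∑ i, x i * x i) • 1).PosSemidef
  refine .of_dotProduct_mulVec_nonneg ?_ fun v => ?_
  · unfold Matrix.IsHermitian
    rw [conjTranspose_eq_transpose_of_trivial, transpose_sub, transpose_mul, At, transpose_smul,
      transpose_one]
  · have h1 := main x v
    have h2 : v ⬝ᵥ ((A x * A x) *ᵥ v) = f (x, v) := by
      rw [← mulVec_mulVec, dotProduct_mulVec, ← mulVec_transpose, At]
    rw [star_trivial, sub_mulVec, dotProduct_sub, smul_mulVec, one_mulVec, dotProduct_smul, h2,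
      smul_eq_mul]
    have h3 : x ⬝ᵥ x = ∑ i, x i * x i := rfl
    rw [← h3]; linarith
end coerc

def qL (q : Quaternion ℝ) : Matrix (Fin 4) (Fin 4) ℝ :=
  !![q.re, -q.imI, -q.imJ, -q.imK; q.imI, q.re, -q.imK, q.imJ; q.imJ, q.imK, q.re, -q.imI;
     q.imK, -q.imJ, q.imI, q.re]

noncomputable def qLh : Quaternion ℝ →ₐ[ℝ] Matrix (Fin 4) (Fin 4) ℝ :=
  AlgHom.ofLinearMap
    { toFun := qL
      map_add' := fun x y => by
        ext i j; fin_cases i <;> fin_cases j <;> simp [qL] <;> ring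
      map_smul' := fun c x => by
        ext i j; fin_cases i <;> fin_cases j <;> simp [qL] }
    (by ext i j; fin_cases i <;> fin_cases j <;> simp [qL] <;> rfl)
    (fun x y => by
      ext i j
      fin_cases i <;> fin_cases j <;> simp [qL, Matrix.mul_apply, Fin.sum_univ_four] <;> ring)

lemma qLh_apply (q) : qLh q = qL q := rfl

noncomputable def qI : Matrix (Fin 4) (Fin 4) ℝ := !![0,-1,0,0;1,0,0,0;0,0,0,1;0,0,-1,0]
noncomputable def qJ : Matrix (Fin 4) (Fin 4) ℝ := !![0,0,-1,0;0,0,0,-1;1,0,0,0;0,1,0,0]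

lemma qII : qI * qI = -1 := by
  ext i j; fin_cases i <;> fin_cases j <;> simp [qI, Matrix.mul_apply, Fin.sum_univ_four]
lemma qJJ : qJ * qJ = -1 := by
  ext i j; fin_cases i <;> fin_cases j <;> simp [qJ, Matrix.mul_apply, Fin.sum_univ_four]
lemma qIJ : qI * qJ = -(qJ * qI) := by
  ext i j; fin_cases i <;> fin_cases j <;> simp [qI, qJ, Matrix.mul_apply, Fin.sum_univ_four]
lemma qIt : qIᵀ = -qI := by
  ext i j; fin_cases i <;> fin_cases j <;> simp [qI]
lemma qJt : qJᵀ = -qJ := by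
  ext i j; fin_cases i <;> fin_cases j <;> simp [qJ]
lemma qIL (q) : qI * qL q = qL q * qI := by
  ext i j; fin_cases i <;> fin_cases j <;> simp [qI, qL, Matrix.mul_apply, Fin.sum_univ_four]
lemma qJL (q) : qJ * qL q = qL q * qJ := by
  ext i j; fin_cases i <;> fin_cases j <;> simp [qJ, qL, Matrix.mul_apply, Fin.sum_univ_four]

noncomputable def Phi (N : ℕ) :
    Matrix (Fin N) (Fin N) (Quaternion ℝ) →ₐ[ℝ] Matrix (Fin N × Fin 4) (Fin N × Fin 4) ℝ :=
  (compAlgEquiv (Fin N) (Fin 4) ℝ ℝ).toAlgHom.comp qLh.mapMatrix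

noncomputable def Psi (N : ℕ) :
    Matrix (Fin 4) (Fin 4) ℝ →ₐ[ℝ] Matrix (Fin N × Fin 4) (Fin N × Fin 4) ℝ :=
  (compAlgEquiv (Fin N) (Fin 4) ℝ ℝ).toAlgHom.comp (Matrix.scalarAlgHom (Fin N) ℝ)

lemma Psi_t (N : ℕ) (A) : (Psi N A)ᵀ = Psi N Aᵀ := by
  ext ⟨a, i⟩ ⟨b, j⟩
  show (Matrix.scalar (Fin N) A) b a j i = (Matrix.scalar (Fin N) Aᵀ) a b i j
  simp only [Matrix.scalar_apply, diagonal_apply]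
  by_cases h : a = b
  · subst h; simp
  · simp [h, Ne.symm h]

lemma Psi_Phi (N : ℕ) (A) (hA : ∀ q, A * qL q = qL q * A) (M) :
    Psi N A * Phi N M = Phi N M * Psi N A := by
  have e1 : Psi N A = compAlgEquiv (Fin N) (Fin 4) ℝ ℝ (diagonal fun _ => A) := rfl
  have e2 : Phi N M = compAlgEquiv (Fin N) (Fin 4) ℝ ℝ (M.map qLh) := rfl
  rw [e1, e2, ← map_mul, ← map_mul]
  congr 1
  ext1 i j
  rw [diagonal_mul, mul_diagonal]
  exact hA _

theorem tgt_of {N n : ℕ} (B : (Fin n → ℝ) →ₗ[ℝ] Matrix (Fin N) (Fin N) (Quaternion ℝ))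
    (hB : ∀ v, v ≠ 0 → IsUnit (B v)) :
    ∃ τ c, Nonempty (Tgt n N τ c ((Fin N × Fin 4) ⊕ (Fin N × Fin 4))) := by
  set b : Fin n → Matrix (Fin N × Fin 4) (Fin N × Fin 4) ℝ :=
    fun i => Phi N (B (fun j => if i = j then 1 else 0)) with hb
  have bs : ∀ x : Fin n → ℝ, ∑ i, x i • b i = Phi N (B x) := by
    intro x
    rw [B.pi_apply_eq_sum_univ x, map_sum]
    exact Finset.sum_congr rfl fun i _ => by rw [map_smul]
  set t : Fin n → Matrix ((Fin N × Fin 4) ⊕ (Fin N × Fin 4)) ((Fin N × Fin 4) ⊕ (Fin N × Fin 4)) ℝ :=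
    fun i => fromBlocks 0 (b i)ᵀ (b i) 0 with ht
  have tt : ∀ i, (t i)ᵀ = t i := by
    intro i
    rw [ht, fromBlocks_transpose]; simp
  have ts : ∀ x : Fin n → ℝ, ∑ i, x i • t i = fromBlocks 0 (Phi N (B x))ᵀ (Phi N (B x)) 0 := by
    intro x
    rw [← bs]
    ext i j
    rw [Matrix.sum_apply]
    rcases i with i | i <;> rcases j with j | j <;>
      simp [ht, Matrix.sum_apply]
  obtain ⟨c, c0, c1, hc⟩ := exists_c t tt (by
    intro x hx
    obtain ⟨u, hu⟩ := hB x hx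
    have h1 : Phi N (↑u⁻¹ : Matrix (Fin N) (Fin N) (Quaternion ℝ)) * Phi N (B x) = 1 := by
      rw [← map_mul, ← hu, Units.inv_mul, map_one]
    have h2 : Phi N (B x) * Phi N (↑u⁻¹ : Matrix (Fin N) (Fin N) (Quaternion ℝ)) = 1 := by
      rw [← map_mul, ← hu, Units.mul_inv, map_one]
    refine ⟨fromBlocks 0 (Phi N ↑u⁻¹) (Phi N ↑u⁻¹)ᵀ 0, ?_⟩
    rw [ts, fromBlocks_multiply, ← transpose_mul, h1, h2]
    simp [fromBlocks_one])
  have hτ : ∀ i, ∃ τ : ℝ, 0 ≤ τ ∧ (τ • 1 - t i * t i).PosSemidef := fun i => exists_tau _ (tt i)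
  choose τ τ0 hτ using hτ
  have cI : ∀ i, Psi N qI * b i = b i * Psi N qI := fun i => Psi_Phi N _ qIL _
  have cJ : ∀ i, Psi N qJ * b i = b i * Psi N qJ := fun i => Psi_Phi N _ qJL _
  have It : (Psi N qI)ᵀ = -Psi N qI := by rw [Psi_t, qIt, map_neg]
  have Jt : (Psi N qJ)ᵀ = -Psi N qJ := by rw [Psi_t, qJt, map_neg]
  have cI' : ∀ i, Psi N qI * (b i)ᵀ = (b i)ᵀ * Psi N qI := by
    intro i
    have := congrArg transpose (cI i)
    rw [transpose_mul, transpose_mul, It, mul_neg, neg_mul, neg_inj] at this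
    exact this.symm
  have cJ' : ∀ i, Psi N qJ * (b i)ᵀ = (b i)ᵀ * Psi N qJ := by
    intro i
    have := congrArg transpose (cJ i)
    rw [transpose_mul, transpose_mul, Jt, mul_neg, neg_mul, neg_inj] at this
    exact this.symm
  have n1 : (-1 : Matrix ((Fin N × Fin 4) ⊕ (Fin N × Fin 4)) ((Fin N × Fin 4) ⊕ (Fin N × Fin 4)) ℝ) =
      fromBlocks (-1) 0 0 (-1) := by rw [← fromBlocks_one, fromBlocks_neg]; simp
  refine ⟨∑ i, τ i, c, ⟨{
    ε := fromBlocks 1 0 0 (-1)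
    t := t
    I := fromBlocks (Psi N qI) 0 0 (Psi N qI)
    J := fromBlocks (Psi N qJ) 0 0 (Psi N qJ)
    εε := by rw [fromBlocks_multiply]; simp [fromBlocks_one]
    εt := by rw [fromBlocks_transpose]; simp
    tε := fun i => by simp [ht, fromBlocks_multiply, fromBlocks_neg]
    tt := tt
    II := by rw [fromBlocks_multiply, ← map_mul, qII, n1]; simp
    JJ := by rw [fromBlocks_multiply, ← map_mul, qJJ, n1]; simp
    IJ := by
      rw [fromBlocks_multiply, fromBlocks_multiply, fromBlocks_neg, ← map_mul, qIJ]; simp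
    It := by rw [fromBlocks_transpose, fromBlocks_neg, It]; simp
    Jt := by rw [fromBlocks_transpose, fromBlocks_neg, Jt]; simp
    Iε := by rw [fromBlocks_multiply, fromBlocks_multiply]; simp
    Jε := by rw [fromBlocks_multiply, fromBlocks_multiply]; simp
    Itt := fun i => by simp only [ht]; rw [fromBlocks_multiply, fromBlocks_multiply]; simp [cI, cI']
    Jtt := fun i => by simp only [ht]; rw [fromBlocks_multiply, fromBlocks_multiply]; simp [cJ, cJ']
    cW := by simp; ring
    τ0 := Finset.sum_nonneg fun i _ => τ0 i
    hτ := fun i => by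
      have e : (∑ i, τ i) • 1 - t i * t i = (τ i • 1 - t i * t i) +
          ((∑ i, τ i) - τ i) • (1 : Matrix ((Fin N × Fin 4) ⊕ (Fin N × Fin 4))
            ((Fin N × Fin 4) ⊕ (Fin N × Fin 4)) ℝ) := by module
      rw [e]
      refine (hτ i).add (psd_smul psd_one ?_)
      rw [sub_nonneg]
      exact Finset.single_le_sum (fun i _ => τ0 i) (Finset.mem_univ i)
    c0 := c0
    c1 := c1
    hc := hc }⟩⟩

theorem div_of_unit {N n : ℕ} (B : (Fin n → ℝ) →ₗ[ℝ] Matrix (Fin N) (Fin N) (Quaternion ℝ))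
    (hB : ∀ v, v ≠ 0 → IsUnit (B v)) (a b : ℕ) (hb : b < 4) (hn : tab b + 8 * a + 3 ≤ n) :
    2 ^ (4 * a + b + 1) ∣ N := by
  set m := tab b + 8 * a + 3 with hm
  let j : (Fin m → ℝ) →ₗ[ℝ] (Fin n → ℝ) :=
    { toFun := fun x k => if h : k.1 < m then x ⟨k.1, h⟩ else 0
      map_add' := fun x y => by ext k; by_cases h : k.1 < m <;> simp [h]
      map_smul' := fun c x => by ext k; by_cases h : k.1 < m <;> simp [h] }
  have hj : ∀ v, v ≠ 0 → j v ≠ 0 := by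
    intro v hv h0
    apply hv
    ext k
    have := congrFun h0 ⟨k.1, by omega⟩
    simpa [j] using this
  obtain ⟨τ, c, ⟨T⟩⟩ := tgt_of (B.comp j) (fun v hv => hB _ (hj v hv))
  exact T.div a b hb hm

end HRN


namespace HRN
open Matrix

lemma flip_mul {R : Type} [Ring R] [Algebra ℝ R] [IsDedekindFiniteMonoid R] (x y : R) (s : ℝ)
    (hs : s ≠ 0) (h : x * y = s • 1) : y * x = s • 1 := by
  have : (s⁻¹ • x) * y = 1 := by rw [smul_mul_assoc, h, smul_smul, inv_mul_cancel₀ hs, one_smul]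
  have := mul_eq_one_symm this
  rw [mul_smul_comm] at this
  rw [← this, smul_smul, mul_inv_cancel₀ hs, one_smul]

def HB (κ ι : Type) [Fintype κ] [Fintype ι] [DecidableEq ι] : Prop :=
  ∃ B : (κ → ℝ) →ₗ[ℝ] Matrix ι ι (Quaternion ℝ), ∀ x, (B x)ᴴ * B x = (x ⬝ᵥ x) • 1

def HC (κ ι : Type) [Fintype κ] [Fintype ι] [DecidableEq ι] : Prop :=
  ∃ B : (κ → ℝ) →ₗ[ℝ] Matrix ι ι ℝ, ∀ x, (B x)ᵀ * B x = (x ⬝ᵥ x) • 1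

section
variable {κ κ' ι K : Type} [Fintype κ] [Fintype κ'] [Fintype ι] [DecidableEq ι]
  [Fintype K] [DecidableEq K]

noncomputable def al (ι K : Type) [Fintype ι] [DecidableEq ι] [Fintype K] [DecidableEq K] :
    Matrix ι ι (Quaternion ℝ) →ₐ[ℝ] Matrix (ι × K) (ι × K) (Quaternion ℝ) :=
  (compAlgEquiv ι K (Quaternion ℝ) ℝ).toAlgHom.comp
    (Matrix.scalarAlgHom K ℝ : Quaternion ℝ →ₐ[ℝ] _).mapMatrix

noncomputable def be (ι K : Type) [Fintype ι] [DecidableEq ι] [Fintype K] [DecidableEq K] :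
    Matrix K K ℝ →ₐ[ℝ] Matrix (ι × K) (ι × K) (Quaternion ℝ) :=
  (compAlgEquiv ι K (Quaternion ℝ) ℝ).toAlgHom.comp
    ((Matrix.scalarAlgHom ι ℝ).comp (Algebra.ofId ℝ (Quaternion ℝ)).mapMatrix)

lemma al_eq (B) : al ι K B = compAlgEquiv ι K (Quaternion ℝ) ℝ
    (Matrix.of fun i j => diagonal fun _ => B i j) := rfl

lemma be_eq (C) : be ι K C = compAlgEquiv ι K (Quaternion ℝ) ℝ
    (diagonal fun _ => C.map (algebraMap ℝ (Quaternion ℝ))) := rfl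

lemma al_apply (B) (i j : ι) (k l : K) : al ι K B (i, k) (j, l) = if k = l then B i j else 0 := by
  show (diagonal fun _ => B i j) k l = _
  rw [diagonal_apply]

lemma be_apply (C) (i j : ι) (k l : K) : be ι K C (i, k) (j, l) =
    if i = j then algebraMap ℝ (Quaternion ℝ) (C k l) else 0 := by
  show (diagonal fun _ => C.map (algebraMap ℝ (Quaternion ℝ))) i j k l = _
  rw [diagonal_apply]
  split_ifs <;> rfl

lemma al_star (B) : (al ι K B)ᴴ = al ι K Bᴴ := by
  ext1 ⟨i, k⟩ ⟨j, l⟩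
  rw [conjTranspose_apply, al_apply, al_apply, conjTranspose_apply]
  by_cases h : k = l
  · subst h; simp
  · simp [h, Ne.symm h]

lemma be_star (C) : (be ι K C)ᴴ = be ι K Cᵀ := by
  ext1 ⟨i, k⟩ ⟨j, l⟩
  rw [conjTranspose_apply, be_apply, be_apply, transpose_apply]
  by_cases h : i = j
  · subst h
    simp only [if_true]
    exact Quaternion.star_coe _
  · simp [h, Ne.symm h]

lemma al_be (B C) : al ι K B * be ι K C = be ι K C * al ι K B := by
  rw [al_eq, be_eq, ← map_mul, ← map_mul]
  congr 1
  ext1 i j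
  rw [mul_diagonal, diagonal_mul]
  ext1 k l
  rw [Matrix.of_apply, diagonal_mul, mul_diagonal]
  exact (Algebra.commutes (R := ℝ) (A := Quaternion ℝ) (C k l) (B i j)).symm

lemma HB.other {B : (κ → ℝ) →ₗ[ℝ] Matrix ι ι (Quaternion ℝ)}
    (hB : ∀ x, (B x)ᴴ * B x = (x ⬝ᵥ x) • 1) (x) : B x * (B x)ᴴ = (x ⬝ᵥ x) • 1 := by
  by_cases hx : x = 0
  · subst hx; simp
  · exact flip_mul _ _ _ (fun h => hx (dotProduct_self_eq_zero.1 h)) (hB x)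

lemma HC.other {B : (κ → ℝ) →ₗ[ℝ] Matrix ι ι ℝ}
    (hB : ∀ x, (B x)ᵀ * B x = (x ⬝ᵥ x) • 1) (x) : B x * (B x)ᵀ = (x ⬝ᵥ x) • 1 := by
  by_cases hx : x = 0
  · subst hx; simp
  · exact flip_mul _ _ _ (fun h => hx (dotProduct_self_eq_zero.1 h)) (hB x)

lemma dot_sum (x : κ ⊕ κ' → ℝ) : x ⬝ᵥ x =
    (fun i => x (Sum.inl i)) ⬝ᵥ (fun i => x (Sum.inl i)) +
    (fun i => x (Sum.inr i)) ⬝ᵥ (fun i => x (Sum.inr i)) := by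
  simp [dotProduct, Fintype.sum_sum_type]

lemma cts (c : ℝ) (M : Matrix ι ι (Quaternion ℝ)) : (c • M)ᴴ = c • Mᴴ := by
  ext1 i j
  rw [conjTranspose_apply, Matrix.smul_apply, Matrix.smul_apply, conjTranspose_apply]
  exact Quaternion.star_smul c (M j i)

theorem HB.join (h : HB κ ι) (h' : HC κ' K) : HB (κ ⊕ κ') ((ι × K) ⊕ (ι × K)) := by
  obtain ⟨B, hB⟩ := h
  obtain ⟨C, hC⟩ := h'
  let pl : (κ ⊕ κ' → ℝ) →ₗ[ℝ] (κ → ℝ) := LinearMap.funLeft ℝ ℝ Sum.inl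
  let pr : (κ ⊕ κ' → ℝ) →ₗ[ℝ] (κ' → ℝ) := LinearMap.funLeft ℝ ℝ Sum.inr
  refine ⟨{ toFun := fun x => fromBlocks (al ι K (B (pl x))) (-be ι K (C (pr x))ᵀ)
              (be ι K (C (pr x))) (al ι K (B (pl x))ᴴ)
            map_add' := fun x y => by
              simp only [map_add, transpose_add, conjTranspose_add, fromBlocks_add, neg_add]
            map_smul' := fun c x => by
              simp only [map_smul, transpose_smul, cts, fromBlocks_smul, smul_neg,
                RingHom.id_apply, star_trivial] }, ?_⟩
  intro x
  have d : x ⬝ᵥ x = pl x ⬝ᵥ pl x + pr x ⬝ᵥ pr x := dot_sum x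
  simp only [LinearMap.coe_mk, AddHom.coe_mk]
  have e1 := hB (pl x)
  have e2 := HB.other hB (pl x)
  have e3 := hC (pr x)
  have e4 := HC.other hC (pr x)
  rw [fromBlocks_conjTranspose, fromBlocks_multiply]
  simp only [conjTranspose_neg, al_star, be_star, transpose_transpose, conjTranspose_conjTranspose]
  rw [← map_mul, ← map_mul, e1, e3, neg_mul_neg, ← map_mul, ← map_mul, e2, e4, mul_neg, al_be,
    neg_add_cancel, neg_mul, al_be, neg_add_cancel, d, ← fromBlocks_one, fromBlocks_smul]
  simp only [map_smul, map_one, smul_zero, add_smul]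
  rw [add_comm ((pr x ⬝ᵥ pr x) • (1 : Matrix (ι × K) (ι × K) (Quaternion ℝ)))]

theorem HB.amp (h : HB κ ι) : HB κ (ι × K) := by
  obtain ⟨B, hB⟩ := h
  refine ⟨(al ι K).toLinearMap.comp B, fun x => ?_⟩
  show (al ι K (B x))ᴴ * al ι K (B x) = _
  rw [al_star, ← map_mul, hB, map_smul, map_one]

theorem HB.fin (h : HB κ ι) {n N : ℕ} (hn : n ≤ Fintype.card κ) (hN : Fintype.card ι = N) :
    HB (Fin n) (Fin N) := by
  obtain ⟨B, hB⟩ := h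
  obtain ⟨e⟩ : Nonempty (Fin n ↪ κ) :=
    Function.Embedding.nonempty_of_card_le (by simpa using hn)
  let f : ι ≃ Fin N := Fintype.equivFinOfCardEq hN
  let r := reindexAlgEquiv ℝ (Quaternion ℝ) f
  have rs : ∀ M, (r M)ᴴ = r Mᴴ := fun M => rfl
  refine ⟨r.toLinearMap.comp (B.comp (Function.ExtendByZero.linearMap ℝ e)), fun x => ?_⟩
  have e1 : (Function.ExtendByZero.linearMap ℝ e x) ⬝ᵥ (Function.ExtendByZero.linearMap ℝ e x) =
      x ⬝ᵥ x := by
    symm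
    unfold dotProduct
    refine Fintype.sum_of_injective e e.injective _ _ ?_ ?_
    · intro i hi
      have : Function.ExtendByZero.linearMap ℝ e x i = 0 := by
        simp only [Function.ExtendByZero.linearMap_apply]
        rw [Function.extend_apply' _ _ _ (by simpa using hi)]; rfl
      rw [this, zero_mul]
    · intro i
      simp only [Function.ExtendByZero.linearMap_apply]
      rw [e.injective.extend_apply]
  show (r (B _))ᴴ * r (B _) = _
  rw [rs, ← map_mul, hB, e1, map_smul, map_one]
end

def lm (a : Fin 4 → ℝ) : Matrix (Fin 4) (Fin 4) ℝ :=
  !![a 0, -a 1, -a 2, -a 3; a 1, a 0, -a 3, a 2; a 2, a 3, a 0, -a 1; a 3, -a 2, a 1, a 0]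
def rm (a : Fin 4 → ℝ) : Matrix (Fin 4) (Fin 4) ℝ :=
  !![a 0, -a 1, -a 2, -a 3; a 1, a 0, a 3, -a 2; a 2, -a 3, a 0, a 1; a 3, a 2, -a 1, a 0]
def km : Matrix (Fin 4) (Fin 4) ℝ := diagonal ![1, -1, -1, -1]

lemma lm_lm (a) : (lm a)ᵀ * lm a = (a ⬝ᵥ a) • 1 := by
  ext i j
  fin_cases i <;> fin_cases j <;>
    simp [lm, Matrix.mul_apply, Fin.sum_univ_four, dotProduct] <;> ring
lemma rm_rm (a) : (rm a)ᵀ * rm a = (a ⬝ᵥ a) • 1 := by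
  ext i j
  fin_cases i <;> fin_cases j <;>
    simp [rm, Matrix.mul_apply, Fin.sum_univ_four, dotProduct] <;> ring
lemma km_t : kmᵀ = km := by simp [km]
lemma km_km : km * km = 1 := by
  rw [km, diagonal_mul_diagonal, ← diagonal_one]; congr 1; ext i; fin_cases i <;> simp
lemma km_lr (a b) : km * ((lm b)ᵀ * rm a) = ((lm a)ᵀ * rm b) * km := by
  ext i j
  rw [km, diagonal_mul, mul_diagonal]
  fin_cases i <;> fin_cases j <;>
    simp [rm, lm, Matrix.mul_apply, Fin.sum_univ_four] <;> ring

lemma lm_add (a b) : lm (a + b) = lm a + lm b := by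
  ext i j; fin_cases i <;> fin_cases j <;> simp [lm] <;> ring
lemma rm_add (a b) : rm (a + b) = rm a + rm b := by
  ext i j; fin_cases i <;> fin_cases j <;> simp [rm] <;> ring
lemma lm_smul (c : ℝ) (b) : lm (c • b) = c • lm b := by
  ext i j; fin_cases i <;> fin_cases j <;> simp [lm]
lemma rm_smul (c : ℝ) (b) : rm (c • b) = c • rm b := by
  ext i j; fin_cases i <;> fin_cases j <;> simp [rm]

lemma HC1 : HC (Fin 1) (Fin 1) :=
  ⟨{ toFun := fun a => diagonal a
     map_add' := fun a b => by rw [diagonal_add]; rfl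
     map_smul' := fun c a => by rw [← diagonal_smul]; rfl }, fun x => by
       ext i j; fin_cases i; fin_cases j; simp [dotProduct]⟩

lemma HC2 : HC (Fin 2) (Fin 2) :=
  ⟨{ toFun := fun a => !![a 0, -a 1; a 1, a 0]
     map_add' := fun a b => by ext i j; fin_cases i <;> fin_cases j <;> simp; ring
     map_smul' := fun c a => by ext i j; fin_cases i <;> fin_cases j <;> simp }, fun x => by
       ext i j
       fin_cases i <;> fin_cases j <;> simp [dotProduct, Matrix.mul_apply] <;> ring⟩

lemma HC4 : HC (Fin 4) (Fin 4) :=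
  ⟨{ toFun := lm
     map_add' := lm_add
     map_smul' := lm_smul }, lm_lm⟩

lemma HC8 : HC (Fin 4 ⊕ Fin 4) (Fin 4 ⊕ Fin 4) := by
  let pl : (Fin 4 ⊕ Fin 4 → ℝ) →ₗ[ℝ] (Fin 4 → ℝ) := LinearMap.funLeft ℝ ℝ Sum.inl
  let pr : (Fin 4 ⊕ Fin 4 → ℝ) →ₗ[ℝ] (Fin 4 → ℝ) := LinearMap.funLeft ℝ ℝ Sum.inr
  refine ⟨{ toFun := fun x => fromBlocks (lm (pl x)) (-(rm (pr x) * km))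
              (lm (pr x) * km) (rm (pl x))
            map_add' := fun x y => by
              simp only [map_add, lm_add, rm_add, fromBlocks_add, neg_add, add_mul]
            map_smul' := fun c x => by
              simp only [map_smul, lm_smul, rm_smul, fromBlocks_smul, smul_neg,
                RingHom.id_apply, smul_mul_assoc] }, ?_⟩
  intro x
  have d : x ⬝ᵥ x = pl x ⬝ᵥ pl x + pr x ⬝ᵥ pr x := dot_sum x
  simp only [LinearMap.coe_mk, AddHom.coe_mk]
  set a := pl x
  set b := pr x
  rw [fromBlocks_transpose, fromBlocks_multiply, d, ← fromBlocks_one, fromBlocks_smul]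
  simp only [transpose_neg, transpose_mul, km_t, smul_zero]
  have k1 := km_lr a b
  have k2 := congrArg transpose k1
  simp only [transpose_mul, transpose_transpose, km_t] at k2
  congr 1
  · calc _ = (lm a)ᵀ * lm a + km * ((lm b)ᵀ * lm b) * km := by noncomm_ring
      _ = _ := by rw [lm_lm, lm_lm]; simp [km_km, add_smul]
  · calc _ = -(((lm a)ᵀ * rm b) * km) + km * ((lm b)ᵀ * rm a) := by noncomm_ring
      _ = 0 := by rw [k1, neg_add_cancel]
  · calc _ = -(km * ((rm b)ᵀ * lm a)) + (rm a)ᵀ * lm b * km := by noncomm_ring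
      _ = 0 := by rw [k2, neg_add_cancel]
  · calc _ = km * ((rm b)ᵀ * rm b) * km + (rm a)ᵀ * rm a := by noncomm_ring
      _ = _ := by rw [rm_rm, rm_rm]; simp [km_km, add_smul, add_comm]

noncomputable def qv (a : Fin 4 → ℝ) : Quaternion ℝ := ⟨a 0, a 1, a 2, a 3⟩

lemma qv_add (a b) : qv (a + b) = qv a + qv b := rfl
lemma qv_smul (c : ℝ) (a) : qv (c • a) = c • qv a := rfl
lemma qv_star (a) : star (qv a) * qv a = (a ⬝ᵥ a) • (1 : Quaternion ℝ) := by
  rw [Quaternion.star_mul_self, Quaternion.normSq_def', ← Quaternion.coe_one, ← Quaternion.coe_smul]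
  congr 1
  simp [qv, dotProduct, Fin.sum_univ_four]
  ring

lemma HB4 : HB (Fin 4) (Fin 1) :=
  ⟨{ toFun := fun a => diagonal fun _ => qv a
     map_add' := fun a b => by rw [diagonal_add]; rfl
     map_smul' := fun c a => by rw [← diagonal_smul]; rfl }, fun x => by
       simp only [LinearMap.coe_mk, AddHom.coe_mk]
       rw [diagonal_conjTranspose, diagonal_mul_diagonal, ← diagonal_one, ← diagonal_smul]
       congr 1
       funext i
       exact qv_star x⟩

def Ok (k m : ℕ) : Prop := ∃ (κ ι : Type) (_ : Fintype κ) (_ : Fintype ι) (_ : DecidableEq ι),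
  Fintype.card κ = k ∧ Fintype.card ι = m ∧ HB κ ι

lemma Ok.step {k m q : ℕ} {κ K : Type} [Fintype κ] [Fintype K] [DecidableEq K] (h : Ok k m)
    (h' : HC κ K) (h1 : Fintype.card κ = q) (h2 : Fintype.card K = q) : Ok (k + q) (2 * (m * q)) := by
  obtain ⟨κ', ι, _, _, _, rfl, rfl, hB⟩ := h
  refine ⟨κ' ⊕ κ, (ι × K) ⊕ (ι × K), inferInstance, inferInstance, inferInstance, ?_, ?_, hB.join h'⟩
  · simp [h1]
  · simp [h2]; ring

lemma Ok.base (a : ℕ) : Ok (8 * a + 4) (2 ^ (4 * a)) := by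
  induction a with
  | zero => exact ⟨Fin 4, Fin 1, inferInstance, inferInstance, inferInstance, by simp, by simp, HB4⟩
  | succ a ih =>
    have := ih.step HC8 (q := 8) (by simp) (by simp)
    convert this using 1
    · ring
    · rw [mul_add, pow_add]; ring

def tb (b : ℕ) : ℕ := if b = 0 then 4 else if b = 1 then 5 else if b = 2 then 6 else 8

lemma Ok.all (a b : ℕ) (hb : b < 4) : Ok (8 * a + tb b) (2 ^ (4 * a + b)) := by
  have h := Ok.base a
  interval_cases b
  · exact h
  · have := h.step HC1 (q := 1) (by simp) (by simp)
    convert this using 1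
    · rfl
    · rw [pow_add]; ring
  · have := h.step HC2 (q := 2) (by simp) (by simp)
    convert this using 1
    · rfl
    · rw [pow_add]; ring
  · have := h.step HC4 (q := 4) (by simp) (by simp)
    convert this using 1
    · rfl
    · rw [pow_add]; ring

theorem exists_HB (a b q n N : ℕ) (hb : b < 4) (hN : N = 2 ^ (4 * a + b) * q)
    (hn : n ≤ 8 * a + tb b) : HB (Fin n) (Fin N) := by
  obtain ⟨κ, ι, _, _, _, h1, h2, hB⟩ := Ok.all a b hb
  exact (hB.amp (K := Fin q)).fin (by omega) (by simp [h2, hN])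

end HRN


open Matrix

/-- Extended Hurwitz–Radon number: writing the 2-adic valuation of `t` as `4a + b`
with `a ∈ ℤ` and `b ∈ {0,1,2,3}`, `ρ(t) := 8a + 2^b`. -/
noncomputable def hrRho (t : ℚ) : ℤ :=
  8 * (padicValRat 2 t / 4) + 2 ^ (padicValRat 2 t % 4).toNat

namespace HRN

lemma rho_eq (N a b : ℕ) (hN : 1 ≤ N) (hb : b < 4) (h : padicValNat 2 N = 4 * a + b) :
    hrRho ((N : ℚ) / 2) + 4 = 8 * a + tb b := by
  have e : padicValRat 2 ((N : ℚ) / 2) = 4 * a + b - 1 := by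
    have hN' : (N : ℚ) ≠ 0 := by positivity
    rw [padicValRat.div hN' (by norm_num), padicValRat.of_nat, h]
    have : padicValRat 2 (2 : ℚ) = 1 := by
      have := padicValRat.self (p := 2) (by norm_num)
      exact_mod_cast this
    rw [this]; push_cast; ring
  unfold hrRho
  rw [e]
  interval_cases b
  · have h1 : ((4 * a + (0 : ℕ) - 1 : ℤ)) / 4 = a - 1 := by omega
    have h2 : ((4 * a + (0 : ℕ) - 1 : ℤ)) % 4 = 3 := by omega
    have h3 : (3 : ℤ).toNat = 3 := rfl
    rw [h1, h2, h3]; norm_num [tb]; ring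
  · have h1 : ((4 * a + (1 : ℕ) - 1 : ℤ)) / 4 = a := by omega
    have h2 : ((4 * a + (1 : ℕ) - 1 : ℤ)) % 4 = 0 := by omega
    rw [h1, h2]; norm_num [tb]; ring
  · have h1 : ((4 * a + (2 : ℕ) - 1 : ℤ)) / 4 = a := by omega
    have h2 : ((4 * a + (2 : ℕ) - 1 : ℤ)) % 4 = 1 := by omega
    rw [h1, h2]; norm_num [tb]; ring
  · have h1 : ((4 * a + (3 : ℕ) - 1 : ℤ)) / 4 = a := by omega
    have h2 : ((4 * a + (3 : ℕ) - 1 : ℤ)) % 4 = 2 := by omega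
    have h3 : (2 : ℤ).toNat = 2 := rfl
    rw [h1, h2, h3]; norm_num [tb]; ring

end HRN

/-- Entry `𝔤 = 𝔰𝔭(N,N)` of the Hurwitz–Radon value theorem
(via the `𝔭`-part of quaternionic block matrices `[[0,B],[Bᴴ,0]]`):
`ρ⁽¹⁾ = ρ⁽²⁾ = ρ(N/2) + 4`, the Adams–Lax–Phillips number `ℍ(N)`. -/
theorem hurwitzRadon_sp_N_N (N : ℕ) (hN : 1 ≤ N) (n : ℕ) :
    ((∃ B : EuclideanSpace ℝ (Fin n) →ₗ[ℝ] Matrix (Fin N) (Fin N) (Quaternion ℝ),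
        ∀ v, (B v)ᴴ * B v = (‖v‖ ^ 2 : ℝ) • (1 : Matrix (Fin N) (Fin N) (Quaternion ℝ))) ↔
      (∃ B : EuclideanSpace ℝ (Fin n) →ₗ[ℝ] Matrix (Fin N) (Fin N) (Quaternion ℝ),
        ∀ v, v ≠ 0 → IsUnit (B v))) ∧
    ((∃ B : EuclideanSpace ℝ (Fin n) →ₗ[ℝ] Matrix (Fin N) (Fin N) (Quaternion ℝ),
        ∀ v, v ≠ 0 → IsUnit (B v)) ↔
      (n : ℤ) ≤ hrRho ((N : ℚ) / 2) + 4) := by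
  obtain ⟨a, b, hb, hab⟩ : ∃ a b : ℕ, b < 4 ∧ padicValNat 2 N = 4 * a + b :=
    ⟨padicValNat 2 N / 4, padicValNat 2 N % 4, Nat.mod_lt _ (by norm_num), by omega⟩
  have hrho := HRN.rho_eq N a b hN hb hab
  have h12 : (∃ B : EuclideanSpace ℝ (Fin n) →ₗ[ℝ] Matrix (Fin N) (Fin N) (Quaternion ℝ),
        ∀ v, (B v)ᴴ * B v = (‖v‖ ^ 2 : ℝ) • (1 : Matrix (Fin N) (Fin N) (Quaternion ℝ))) →
      (∃ B : EuclideanSpace ℝ (Fin n) →ₗ[ℝ] Matrix (Fin N) (Fin N) (Quaternion ℝ),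
        ∀ v, v ≠ 0 → IsUnit (B v)) := by
    rintro ⟨B, hB⟩
    refine ⟨B, fun v hv => ?_⟩
    have hs : ‖v‖ ^ 2 ≠ 0 := by simpa using hv
    have h1 := hB v
    have h2 := HRN.flip_mul _ _ _ hs h1
    refine ⟨⟨B v, (‖v‖ ^ 2)⁻¹ • (B v)ᴴ, ?_, ?_⟩, rfl⟩
    · rw [mul_smul_comm, h2, smul_smul, inv_mul_cancel₀ hs, one_smul]
    · rw [smul_mul_assoc, h1, smul_smul, inv_mul_cancel₀ hs, one_smul]
  have h23 : (∃ B : EuclideanSpace ℝ (Fin n) →ₗ[ℝ] Matrix (Fin N) (Fin N) (Quaternion ℝ),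
        ∀ v, v ≠ 0 → IsUnit (B v)) → (n : ℤ) ≤ hrRho ((N : ℚ) / 2) + 4 := by
    rintro ⟨B, hB⟩
    rw [hrho]
    by_contra hc
    have hc' : HRN.tab b + 8 * a + 3 ≤ n := by
      have : HRN.tab b + 3 = HRN.tb b + 1 := by
        interval_cases b <;> rfl
      omega
    have := HRN.div_of_unit (B.comp (WithLp.linearEquiv 2 ℝ (Fin n → ℝ)).symm.toLinearMap)
      (fun v hv => hB _ (by simpa using hv)) a b hb hc'
    rw [← hab] at this
    exact pow_succ_padicValNat_not_dvd (p := 2) (by omega) this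
  have h31 : (n : ℤ) ≤ hrRho ((N : ℚ) / 2) + 4 →
      (∃ B : EuclideanSpace ℝ (Fin n) →ₗ[ℝ] Matrix (Fin N) (Fin N) (Quaternion ℝ),
        ∀ v, (B v)ᴴ * B v = (‖v‖ ^ 2 : ℝ) • (1 : Matrix (Fin N) (Fin N) (Quaternion ℝ))) := by
    intro h
    rw [hrho] at h
    obtain ⟨q, hq⟩ : 2 ^ (4 * a + b) ∣ N := by rw [← hab]; exact pow_padicValNat_dvd
    obtain ⟨B, hB⟩ := HRN.exists_HB a b q n N hb hq (by omega)
    refine ⟨B.comp (WithLp.linearEquiv 2 ℝ (Fin n → ℝ)).toLinearMap, fun v => ?_⟩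
    have e : ‖v‖ ^ 2 = (WithLp.linearEquiv 2 ℝ (Fin n → ℝ) v) ⬝ᵥ
        (WithLp.linearEquiv 2 ℝ (Fin n → ℝ) v) := by
      rw [EuclideanSpace.real_norm_sq_eq]
      simp [dotProduct, sq]
    rw [e]
    exact hB _
  exact ⟨⟨h12, fun h => h31 (h23 h)⟩, ⟨h23, fun h => h12 (h31 h)⟩⟩
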